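/- (Symmetry.) Let h ≥ 0 with h ≠ 1 and let d ∈ {n + α/π : n ∈ ℤ} ∪ {n − α/π : n ∈ ℤ}. (i) For every φ ∈ 𝒜_h(d) there exists ψ ∈ 𝒜_h(d) with E_h(ψ) ≤ E_h(φ) such that x ↦ cos ψ(x) is an even function and x ↦ sin ψ(x) is an odd function. (ii) If φ ∈ 𝒜_h(d) satisfies E_h(φ) = ℰ_h(d), then there exists t₀ ∈ ℝ such that x ↦ cos φ(x − t₀) is even and x ↦ sin φ(x − t₀) is odd. -/

import Mathlib

/-!
The midpoint of the two limits of a phase of winding number in `ℤ ± α/π` is a multiple `c` of `π`.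
If the limits coincide, the constant phase has energy zero. Otherwise `φ` takes the value `c`, say
at `0`, and odd reflection about `(0, c)` of either half of `φ` gives two competitors with even
cosine and odd sine (`oddExtend`). Exchange and anisotropy energies split into the two half-lines.
For the stray field, folding the double integral onto the quadrant `x, y > 0` shows that twice the
original energy exceeds the sum of the two reflected ones by a quadratic form with kernel
`(x + y)⁻²` in `u(x) - u(-x)`, where `u = cos φ` (`seminormSq_reflect`). This form is positive
definite, since `(x + y)⁻² = ∫₀^∞ l e^{-l(x+y)} dl` and the Laplace transform is injective
(`kernel_posDef`). Hence one of the competitors has energy at most that of `φ`, and for a minimiser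
the quadratic form vanishes, so `cos φ` is even.

It remains to deduce that `sin φ` is odd. Comparing a minimiser with compactly supported
perturbations, and bounding the stray-field contribution by the total variation of the change of
`cos φ` (`pairing_le`), gives an Euler–Lagrange inequality
`|∫ φ' η'| ≤ C ∫ (|η| |φ'| + |sin φ| |η'|)` (`euler_lagrange`). At a point with
`sin φ = 0` and `φ' = 0` it forces `φ'` to vanish nearby, so by connectedness a non-constant
minimiser has no such point (`deriv_ne_zero_of_minimal`). Therefore `φ` is determined by `cos φ`
together with its value and slope at the origin, which gives `φ(x) = 2c - φ(-x)`
(`eq_pointReflect`).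
-/

open Real MeasureTheory Filter Topology
open scoped ENNReal NNReal

noncomputable section

/-- `k = min {h, 1}`. -/
def kparam (h : ℝ) : ℝ := min h 1

/-- `α = arccos k ∈ [0, π/2]`. -/
def alphaParam (h : ℝ) : ℝ := Real.arccos (kparam h)

/-- The anisotropy potential `W_h(θ) = (1/2)(cos²θ − 2h cos θ + 2hk − k²)`. -/
def Wpot (h θ : ℝ) : ℝ :=
  (1/2) * ((Real.cos θ)^2 - 2*h*Real.cos θ + 2*h*(kparam h) - (kparam h)^2)

/-- The set `2πℤ + {−α, α}` of allowed limits at `±∞`. -/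
def limSet (h : ℝ) : Set ℝ :=
  {y | ∃ n : ℤ, y = 2*Real.pi*n + alphaParam h ∨ y = 2*Real.pi*n - alphaParam h}

/-- The total energy `E_h(φ)`, valued in `[0, ∞]`:
exchange + anisotropy energy plus the stray-field (homogeneous `H^{1/2}`) energy. -/
def energy (h : ℝ) (φ : ℝ → ℝ) : ℝ≥0∞ :=
  ENNReal.ofReal (1/2) *
      (∫⁻ x : ℝ, ENNReal.ofReal ((deriv φ x)^2 + 2 * Wpot h (φ x))) +
    ENNReal.ofReal (1/(4*Real.pi)) *
      (∫⁻ s : ℝ, ∫⁻ t : ℝ,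
        ENNReal.ofReal ((Real.cos (φ s) - Real.cos (φ t))^2 / (s - t)^2))

/-- An admissible phase: `C¹`, limits at `±∞` in `2πℤ + {−α, α}`, finite energy. -/
def Admissible (h : ℝ) (φ : ℝ → ℝ) : Prop :=
  ContDiff ℝ 1 φ ∧
    (∃ L ∈ limSet h, Tendsto φ atTop (𝓝 L)) ∧
    (∃ L ∈ limSet h, Tendsto φ atBot (𝓝 L)) ∧
    energy h φ < ⊤

/-- The winding number `deg(φ) = (φ(+∞) − φ(−∞))/(2π)`. -/
def deg (φ : ℝ → ℝ) : ℝ :=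
  (limUnder atTop φ - limUnder atBot φ) / (2*Real.pi)

/-- `𝒜_h(d)`: admissible phases of winding number `d`. -/
def AA (h d : ℝ) : Set (ℝ → ℝ) := {φ | Admissible h φ ∧ deg φ = d}

/-- `ℰ_h(d) = inf {E_h(φ) : φ ∈ 𝒜_h(d)}`. -/
def Einf (h d : ℝ) : ℝ≥0∞ := ⨅ φ ∈ AA h d, energy h φ

/-- `D_α = {n + j·α/π : n ∈ ℤ, j ∈ {−1, 0, 1}}`. -/
def Dset (h : ℝ) : Set ℝ :=
  {d | ∃ n j : ℤ, (j = -1 ∨ j = 0 ∨ j = 1) ∧ d = n + j * alphaParam h / Real.pi}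

/-! ### Positive definiteness of the kernel `(x + y)⁻²` -/

lemma lintegral_eq_halfline {f : ℝ → ℝ≥0∞} (hf : Measurable f) :
    ∫⁻ x, f x = ∫⁻ x in Set.Ioi (0:ℝ), (f x + f (-x)) := by
  rw [lintegral_add_left hf]
  have h1 : ∫⁻ x in Set.Ioi (0:ℝ), f (-x) = ∫⁻ x in Set.Iio (0:ℝ), f x := by
    have := (Measure.measurePreserving_neg (volume : Measure ℝ)).setLIntegral_comp_preimage
      (s := Set.Iio (0:ℝ)) measurableSet_Iio hf
    rw [← this]
    congr 2
    ext x; simp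
  rw [h1, setLIntegral_congr (Iio_ae_eq_Iic), ← lintegral_add_compl f (measurableSet_Ioi (a := (0:ℝ)))]
  simp

lemma integral_mul_exp_neg {s : ℝ} (hs : 0 < s) :
    ∫ l in Set.Ioi (0:ℝ), l * exp (-(l * s)) = 1 / s ^ 2 := by
  have := integral_rpow_mul_exp_neg_mul_Ioi (a := 2) (r := s) (by norm_num) hs
  have h2 : Real.Gamma 2 = 1 := by simp
  rw [h2, mul_one] at this
  rw [show (1:ℝ) / s ^ 2 = (1 / s) ^ (2:ℝ) by rw [Real.rpow_two, one_div_pow], ← this]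
  refine setIntegral_congr_fun measurableSet_Ioi fun l _ => ?_
  norm_num [mul_comm]

lemma integrable_exp_neg_mul {r : ℝ} (hr : 0 < r) :
    Integrable (fun x : ℝ => exp (-(r * x))) (volume.restrict (Set.Ioi 0)) := by
  have := integrableOn_exp_mul_Ioi (a := -r) (by linarith) 0
  simpa [IntegrableOn] using this

/-- A bounded continuous function on the half-line is determined by its Laplace transform.
Weierstrass approximation in the variable `e^{-x}` lets one test `g` against itself. -/
lemma eq_zero_of_laplace_eq_zero {g : ℝ → ℝ} (hg : Continuous g) {C : ℝ} (hb : ∀ x, |g x| ≤ C)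
    (h : ∀ l : ℝ, 0 < l → ∫ x in Set.Ioi (0:ℝ), g x * exp (-(l * x)) = 0) :
    ∀ x > 0, g x = 0 := by
  have hC : 0 ≤ C := (abs_nonneg _).trans (hb 0)
  set μ : Measure ℝ := volume.restrict (Set.Ioi 0) with hμ
  have hint : ∀ l : ℝ, 0 < l → Integrable (fun x => g x * exp (-(l * x))) μ := fun l hl =>
    (integrable_exp_neg_mul hl).bdd_mul (c := C) hg.aestronglyMeasurable
      (Eventually.of_forall fun x => by simpa using hb x)
  have hpoly : ∀ p : Polynomial ℝ,
      Integrable (fun x => g x * exp (-x) * p.eval (exp (-x))) μ ∧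
      ∫ x, g x * exp (-x) * p.eval (exp (-x)) ∂μ = 0 := by
    intro p
    induction p using Polynomial.induction_on' with
    | add p q hp hq =>
      simp only [Polynomial.eval_add, mul_add]
      exact ⟨hp.1.add hq.1, by rw [integral_add hp.1 hq.1, hp.2, hq.2, add_zero]⟩
    | monomial n a =>
      have e : (fun x => g x * exp (-x) * (Polynomial.monomial n a).eval (exp (-x)))
          = fun x => a * (g x * exp (-(((n:ℝ) + 1) * x))) := by
        funext x
        rw [Polynomial.eval_monomial, ← Real.exp_nat_mul,
          show -(((n:ℝ) + 1) * x) = -x + n * -x by ring, Real.exp_add]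
        ring
      rw [e]
      have hn : (0:ℝ) < n + 1 := by positivity
      refine ⟨(hint _ hn).const_mul _, ?_⟩
      rw [integral_const_mul, h _ hn, mul_zero]
  -- the function `t ↦ t g(-log t)`, continuous on `[0,1]`
  let f : ℝ → ℝ := fun t => t * g (-Real.log t)
  have hf : Continuous f := by
    rw [continuous_iff_continuousAt]
    intro t
    rcases eq_or_ne t 0 with rfl | ht
    · have : Tendsto f (𝓝 0) (𝓝 0) := by
        refine squeeze_zero_norm (a := fun t => |t| * C) (fun t => ?_) ?_
        · simp only [f, norm_mul, Real.norm_eq_abs]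
          exact mul_le_mul_of_nonneg_left (hb _) (abs_nonneg _)
        · have : Continuous fun t : ℝ => |t| * C := by fun_prop
          simpa using this.tendsto 0
      simpa [ContinuousAt, f] using this
    · exact continuousAt_id.mul (hg.continuousAt.comp (Real.continuousAt_log ht).neg)
  have hfe : ∀ x, f (exp (-x)) = exp (-x) * g x := fun x => by simp [f]
  have hI : Integrable (fun x => g x * exp (-x) * f (exp (-x))) μ := by
    have : Integrable (fun x => (g x * g x) * exp (-(2 * x))) μ :=
      (integrable_exp_neg_mul (by norm_num : (0:ℝ) < 2)).bdd_mul (c := C * C)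
        (hg.mul hg).aestronglyMeasurable
        (Eventually.of_forall fun x => by
          rw [norm_mul]; exact mul_le_mul (hb x) (hb x) (norm_nonneg _) hC)
    refine this.congr (Eventually.of_forall fun x => ?_)
    simp only [hfe]
    rw [show -(2 * x) = -x + -x by ring, Real.exp_add]; ring
  have hzero : ∫ x, g x * exp (-x) * f (exp (-x)) ∂μ = 0 := by
    have hint1 : Integrable (fun x => g x * exp (-x)) μ := by simpa using hint 1 one_pos
    set A := ∫ x, |g x * exp (-x)| ∂μ with hA
    have hA0 : 0 ≤ A := integral_nonneg fun _ => abs_nonneg _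
    refine abs_eq_zero.mp (le_antisymm (le_of_forall_pos_le_add fun ε hε => ?_) (abs_nonneg _))
    obtain ⟨p, hp⟩ := exists_polynomial_near_of_continuousOn 0 1 f hf.continuousOn
      (ε / (A + 1)) (by positivity)
    have e : ∫ x, g x * exp (-x) * f (exp (-x)) ∂μ
        = ∫ x, (g x * exp (-x) * f (exp (-x)) - g x * exp (-x) * p.eval (exp (-x))) ∂μ := by
      rw [integral_sub hI (hpoly p).1, (hpoly p).2, sub_zero]
    rw [e, zero_add, ← Real.norm_eq_abs]
    calc _ ≤ ∫ x, |g x * exp (-x)| * (ε / (A + 1)) ∂μ := by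
          refine norm_integral_le_of_norm_le (μ := μ) (hint1.abs.mul_const (ε / (A + 1))) ?_
          filter_upwards [ae_restrict_mem measurableSet_Ioi] with x hx
          rw [← mul_sub, norm_mul, Real.norm_eq_abs, Real.norm_eq_abs, abs_sub_comm]
          refine mul_le_mul_of_nonneg_left (hp _ ⟨(exp_pos _).le, ?_⟩).le (abs_nonneg _)
          exact exp_le_one_iff.mpr (by simpa using (Set.mem_Ioi.mp hx).le)
      _ = A * (ε / (A + 1)) := by rw [integral_mul_const]
      _ ≤ ε := by
          rw [mul_div_assoc', div_le_iff₀ (by positivity)]; nlinarith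
  have hnn : ∀ x, 0 ≤ g x * exp (-x) * f (exp (-x)) := fun x => by
    rw [hfe]; nlinarith [mul_self_nonneg (g x * exp (-x))]
  have hae := (integral_eq_zero_iff_of_nonneg hnn hI).mp hzero
  have hcont : Continuous fun x => g x * exp (-x) * f (exp (-x)) := by fun_prop
  have heq := Measure.eqOn_open_of_ae_eq hae isOpen_Ioi hcont.continuousOn continuousOn_const
  intro x hx
  have := heq hx
  simp only [hfe, Pi.zero_apply] at this
  have h2 : (g x * exp (-x)) ^ 2 = 0 := by rw [← this]; ring
  simpa using h2

/-- Positive definiteness of the kernel `(x+y)⁻²` on the half-line: since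
`(x+y)⁻² = ∫₀^∞ l e^{-l(x+y)} dl`, the quadratic form is `∫₀^∞ l (∫ g e^{-lx} dx)² dl`. -/
lemma kernel_posDef {g : ℝ → ℝ} (hg : Continuous g) {C : ℝ} (hb : ∀ x, |g x| ≤ C)
    (hI : Integrable (fun z : ℝ × ℝ => g z.1 * g z.2 / (z.1 + z.2) ^ 2)
      ((volume.restrict (Set.Ioi 0)).prod (volume.restrict (Set.Ioi 0)))) :
    0 ≤ ∫ z : ℝ × ℝ, g z.1 * g z.2 / (z.1 + z.2) ^ 2
      ∂((volume.restrict (Set.Ioi 0)).prod (volume.restrict (Set.Ioi 0))) ∧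
    (∫ z : ℝ × ℝ, g z.1 * g z.2 / (z.1 + z.2) ^ 2
      ∂((volume.restrict (Set.Ioi 0)).prod (volume.restrict (Set.Ioi 0))) = 0 →
      ∀ x > 0, g x = 0) := by
  set μ : Measure ℝ := volume.restrict (Set.Ioi 0) with hμ
  have hpos : ∀ᵐ z : ℝ × ℝ ∂(μ.prod μ), 0 < z.1 + z.2 := by
    rw [hμ, Measure.prod_restrict]
    filter_upwards [ae_restrict_mem (measurableSet_Ioi.prod measurableSet_Ioi)] with z hz
    exact add_pos hz.1 hz.2
  let H : ℝ × (ℝ × ℝ) → ℝ := fun p =>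
    p.1 * ((g p.2.1 * exp (-(p.1 * p.2.1))) * (g p.2.2 * exp (-(p.1 * p.2.2))))
  have hHc : Continuous H := by fun_prop
  have hHe : ∀ l z, H (l, z) = (g z.1 * g z.2) * (l * exp (-(l * (z.1 + z.2)))) := by
    intro l z
    simp only [H]
    rw [show -(l * (z.1 + z.2)) = -(l * z.1) + -(l * z.2) by ring, Real.exp_add]
    ring
  have hin : ∀ᵐ z ∂(μ.prod μ), ∫ l, H (l, z) ∂μ = g z.1 * g z.2 / (z.1 + z.2) ^ 2 := by
    filter_upwards [hpos] with z hz
    simp only [hHe]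
    rw [integral_const_mul, hμ, integral_mul_exp_neg hz]; ring
  have hHI : Integrable H (μ.prod (μ.prod μ)) := by
    rw [integrable_prod_iff' hHc.aestronglyMeasurable]
    constructor
    · filter_upwards [hpos] with z hz
      simp only [hHe]
      refine Integrable.const_mul (Integrable.of_integral_ne_zero ?_) _
      rw [hμ, integral_mul_exp_neg hz]; positivity
    · refine hI.abs.congr ?_
      filter_upwards [hpos] with z hz
      have : ∫ l, ‖H (l, z)‖ ∂μ = ∫ l, |g z.1 * g z.2| * (l * exp (-(l * (z.1 + z.2)))) ∂μ := by
        refine setIntegral_congr_fun measurableSet_Ioi fun l hl => ?_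
        have hl' : 0 < l := hl
        simp only [hHe]
        rw [norm_mul, Real.norm_eq_abs, Real.norm_eq_abs, abs_of_nonneg (a := l * _) (by positivity)]
      rw [this, integral_const_mul, hμ, integral_mul_exp_neg hz, abs_div,
        abs_of_nonneg (sq_nonneg (z.1 + z.2))]
      ring
  let G : ℝ → ℝ := fun l => ∫ x, g x * exp (-(l * x)) ∂μ
  have hout : ∀ l, ∫ z, H (l, z) ∂(μ.prod μ) = l * G l ^ 2 := by
    intro l
    simp only [H]
    rw [integral_const_mul, integral_prod_mul (fun x => g x * exp (-(l * x)))
      (fun x => g x * exp (-(l * x))), sq]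
  have hkey : ∫ z : ℝ × ℝ, g z.1 * g z.2 / (z.1 + z.2) ^ 2 ∂(μ.prod μ) = ∫ l, l * G l ^ 2 ∂μ := by
    rw [← integral_congr_ae hin, ← integral_prod_symm _ hHI, integral_prod _ hHI]
    simp only [hout]
  have hnn : 0 ≤ᵐ[μ] fun l => l * G l ^ 2 := by
    filter_upwards [ae_restrict_mem measurableSet_Ioi] with l hl
    have hl' : 0 < l := hl
    simp only [Pi.zero_apply]; positivity
  rw [hkey]
  refine ⟨integral_nonneg_of_ae hnn, fun h0 => ?_⟩
  have hGI : Integrable (fun l => l * G l ^ 2) μ := by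
    simpa only [hout] using hHI.integral_prod_left
  have hae := (integral_eq_zero_iff_of_nonneg_ae hnn hGI).mp h0
  have hGc : ContinuousOn G (Set.Ioi 0) := by
    intro l hl
    have hl' : 0 < l := hl
    refine ContinuousAt.continuousWithinAt ?_
    refine continuousAt_of_dominated (bound := fun x => C * exp (-(l / 2 * x)))
      (Eventually.of_forall fun t => by fun_prop) ?_
      ((integrable_exp_neg_mul (by positivity)).const_mul _) ?_
    · filter_upwards [lt_mem_nhds (show l / 2 < l by linarith)] with t ht
      filter_upwards [ae_restrict_mem measurableSet_Ioi] with x hx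
      have hx' : 0 < x := hx
      rw [norm_mul, Real.norm_eq_abs, Real.norm_eq_abs, abs_of_pos (exp_pos _)]
      refine mul_le_mul (hb x) (exp_le_exp.mpr ?_) (exp_pos _).le ((abs_nonneg _).trans (hb 0))
      nlinarith
    · exact Eventually.of_forall fun x => by fun_prop
  have heq := Measure.eqOn_open_of_ae_eq hae isOpen_Ioi
    (continuousOn_id.mul (hGc.pow 2)) continuousOn_const
  refine eq_zero_of_laplace_eq_zero hg hb fun l hl => ?_
  have := heq (Set.mem_Ioi.mpr hl)
  simpa [hl.ne'] using this

/-! ### Reflection and the `H^{1/2}` seminorm -/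

/-- The squared homogeneous `H^{1/2}` seminorm of `u`, up to a constant factor. -/
def seminormSq (u : ℝ → ℝ) : ℝ≥0∞ :=
  ∫⁻ s : ℝ, ∫⁻ t : ℝ, ENNReal.ofReal ((u s - u t) ^ 2 / (s - t) ^ 2)

/-- The density of `seminormSq u` folded onto the quadrant `x, y > 0`. -/
def foldedDensity (u : ℝ → ℝ) (z : ℝ × ℝ) : ℝ :=
  ((u z.1 - u z.2) ^ 2 + (u (-z.1) - u (-z.2)) ^ 2) / (z.1 - z.2) ^ 2 +
    ((u z.1 - u (-z.2)) ^ 2 + (u (-z.1) - u z.2) ^ 2) / (z.1 + z.2) ^ 2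

/-- Lebesgue measure on the open quadrant. -/
def quadrant : Measure (ℝ × ℝ) :=
  (volume.restrict (Set.Ioi (0:ℝ))).prod (volume.restrict (Set.Ioi (0:ℝ)))

lemma ae_quadrant : ∀ᵐ z : ℝ × ℝ ∂quadrant, 0 < z.1 ∧ 0 < z.2 := by
  rw [quadrant, Measure.prod_restrict]
  filter_upwards [ae_restrict_mem (measurableSet_Ioi.prod measurableSet_Ioi)] with z hz
  exact ⟨hz.1, hz.2⟩

lemma foldedDensity_nonneg (u : ℝ → ℝ) (z : ℝ × ℝ) : 0 ≤ foldedDensity u z := by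
  unfold foldedDensity; positivity

lemma measurable_foldedDensity {u : ℝ → ℝ} (hu : Continuous u) :
    Measurable (foldedDensity u) := by
  have := hu.measurable
  unfold foldedDensity
  fun_prop

lemma seminormSq_eq {u : ℝ → ℝ} (hu : Continuous u) :
    seminormSq u = ∫⁻ z, ENNReal.ofReal (foldedDensity u z) ∂quadrant := by
  have hum := hu.measurable
  let f : ℝ → ℝ → ℝ≥0∞ := fun s t => ENNReal.ofReal ((u s - u t) ^ 2 / (s - t) ^ 2)
  have hf : Measurable (Function.uncurry f) := by
    simp only [f, Function.uncurry_def]; fun_prop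
  have hf1 : ∀ s, Measurable (f s) := fun s => hf.comp measurable_prodMk_left
  have hin : ∀ s, ∫⁻ t, f s t = ∫⁻ t in Set.Ioi (0:ℝ), (f s t + f s (-t)) := fun s =>
    lintegral_eq_halfline (hf1 s)
  have hg : Measurable (Function.uncurry fun s t => f s t + f s (-t)) := by
    simp only [f, Function.uncurry_def]; fun_prop
  have hgm : Measurable fun s => ∫⁻ t in Set.Ioi (0:ℝ), (f s t + f s (-t)) :=
    Measurable.lintegral_prod_right hg
  have e1 : seminormSq u = ∫⁻ s in Set.Ioi (0:ℝ), ∫⁻ t in Set.Ioi (0:ℝ),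
      ((f s t + f s (-t)) + (f (-s) t + f (-s) (-t))) := by
    change ∫⁻ s, ∫⁻ t, f s t = _
    simp_rw [hin]
    rw [lintegral_eq_halfline hgm]
    refine lintegral_congr fun s => ?_
    exact (lintegral_add_left ((hf1 s).add ((hf1 s).comp measurable_neg)) _).symm
  rw [e1, quadrant, lintegral_prod _ (measurable_foldedDensity hu).ennreal_ofReal.aemeasurable]
  refine lintegral_congr fun s => lintegral_congr fun t => ?_
  simp only [f]
  rw [← ENNReal.ofReal_add (by positivity) (by positivity),
    ← ENNReal.ofReal_add (by positivity) (by positivity),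
    ← ENNReal.ofReal_add (by positivity) (by positivity)]
  congr 1
  simp only [foldedDensity]
  rw [show (-s - -t) ^ 2 = (s - t) ^ 2 by ring, show (s - -t) ^ 2 = (s + t) ^ 2 by ring,
    show (-s - t) ^ 2 = (s + t) ^ 2 by ring]
  ring

/-- The interaction term `(x+y)⁻²` is dominated by `(x-y)⁻²` in the quadrant. On the diagonal the
numerator vanishes, so the convention `c / 0 = 0` is harmless. -/
lemma div_add_sq_le {a b x y : ℝ} (hx : 0 < x) (hy : 0 < y) (hab : x = y → a = b) :
    (a - b) ^ 2 / (x + y) ^ 2 ≤ (a - b) ^ 2 / (x - y) ^ 2 := by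
  rcases eq_or_ne x y with h | h
  · simp [hab h]
  · have : x - y ≠ 0 := sub_ne_zero.mpr h
    refine div_le_div_of_nonneg_left (sq_nonneg _) (by positivity) ?_
    nlinarith [mul_pos hx hy]

/-- Two-sided reflection does not increase the `H^{1/2}` energy on average, with equality only for
even functions. The defect is the quadratic form of the kernel `(x+y)⁻²` at `u(x) - u(-x)`. -/
lemma seminormSq_reflect {u : ℝ → ℝ} (hu : Continuous u) {C : ℝ} (hb : ∀ x, |u x| ≤ C)
    (hfin : seminormSq u ≠ ⊤) :
    ∃ δ : ℝ≥0∞, seminormSq (fun x => u |x|) + seminormSq (fun x => u (-|x|)) + δ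
        = 2 * seminormSq u ∧ (δ = 0 → ∀ x, u (-x) = u x) := by
  have hum := hu.measurable
  set g : ℝ → ℝ := fun x => u x - u (-x) with hg
  have hgc : Continuous g := by fun_prop
  have hgb : ∀ x, |g x| ≤ C + C := fun x =>
    (abs_sub _ _).trans (add_le_add (hb _) (hb _))
  have hp : Continuous fun x => u |x| := by fun_prop
  have hm : Continuous fun x => u (-|x|) := by fun_prop
  -- the three folded densities are integrable
  have hI : Integrable (foldedDensity u) quadrant := by
    refine ⟨(measurable_foldedDensity hu).aestronglyMeasurable, ?_⟩
    rw [hasFiniteIntegral_iff_ofReal (Eventually.of_forall (foldedDensity_nonneg u)),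
      ← seminormSq_eq hu]
    exact lt_top_iff_ne_top.mpr hfin
  have hIp : Integrable (foldedDensity fun x => u |x|) quadrant := by
    refine (hI.const_mul 4).mono' (measurable_foldedDensity hp).aestronglyMeasurable ?_
    filter_upwards [ae_quadrant] with z hz
    rw [Real.norm_eq_abs, abs_of_nonneg (foldedDensity_nonneg _ _)]
    have h1 := div_add_sq_le hz.1 hz.2 (fun h => congrArg u h)
    have h2 : 0 ≤ (u (-z.1) - u (-z.2)) ^ 2 / (z.1 - z.2) ^ 2 := by positivity
    have h3 : 0 ≤ ((u z.1 - u (-z.2)) ^ 2 + (u (-z.1) - u z.2) ^ 2) / (z.1 + z.2) ^ 2 := by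
      positivity
    have h4 : 0 ≤ (u z.1 - u z.2) ^ 2 / (z.1 - z.2) ^ 2 := by positivity
    simp only [foldedDensity, abs_neg, abs_of_pos hz.1, abs_of_pos hz.2, add_div] at h3 ⊢
    linarith
  have hIm : Integrable (foldedDensity fun x => u (-|x|)) quadrant := by
    refine (hI.const_mul 4).mono' (measurable_foldedDensity hm).aestronglyMeasurable ?_
    filter_upwards [ae_quadrant] with z hz
    rw [Real.norm_eq_abs, abs_of_nonneg (foldedDensity_nonneg _ _)]
    have h1 := div_add_sq_le hz.1 hz.2 (fun h => congrArg (fun x => u (-x)) h)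
    have h2 : 0 ≤ (u (-z.1) - u (-z.2)) ^ 2 / (z.1 - z.2) ^ 2 := by positivity
    have h3 : 0 ≤ ((u z.1 - u (-z.2)) ^ 2 + (u (-z.1) - u z.2) ^ 2) / (z.1 + z.2) ^ 2 := by
      positivity
    have h4 : 0 ≤ (u z.1 - u z.2) ^ 2 / (z.1 - z.2) ^ 2 := by positivity
    simp only [foldedDensity, abs_neg, abs_of_pos hz.1, abs_of_pos hz.2, add_div] at h1 h3 ⊢
    linarith
  have hpt : ∀ᵐ z ∂quadrant, g z.1 * g z.2 / (z.1 + z.2) ^ 2 =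
      4⁻¹ * (2 * foldedDensity u z - foldedDensity (fun x => u |x|) z
        - foldedDensity (fun x => u (-|x|)) z) := by
    filter_upwards [ae_quadrant] with z hz
    simp only [foldedDensity, abs_neg, abs_of_pos hz.1, abs_of_pos hz.2, hg]
    ring
  have hIg : Integrable (fun z : ℝ × ℝ => g z.1 * g z.2 / (z.1 + z.2) ^ 2) quadrant :=
    ((((hI.const_mul 2).sub hIp).sub hIm).const_mul 4⁻¹).congr (hpt.mono fun z hz => hz.symm)
  obtain ⟨hpos, hzero⟩ := kernel_posDef hgc hgb hIg
  set D := ∫ z : ℝ × ℝ, g z.1 * g z.2 / (z.1 + z.2) ^ 2 ∂quadrant with hD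
  have hI2 : Integrable (fun z => 2 * foldedDensity u z - foldedDensity (fun x => u |x|) z)
      quadrant := (hI.const_mul 2).sub hIp
  have hDe : D = 4⁻¹ * (2 * ∫ z, foldedDensity u z ∂quadrant
      - ∫ z, foldedDensity (fun x => u |x|) z ∂quadrant
      - ∫ z, foldedDensity (fun x => u (-|x|)) z ∂quadrant) := by
    rw [hD, integral_congr_ae hpt, integral_const_mul,
      integral_sub hI2 hIm, integral_sub (hI.const_mul 2) hIp,
      integral_const_mul]
  have conv : ∀ {v : ℝ → ℝ}, Continuous v → Integrable (foldedDensity v) quadrant →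
      seminormSq v = ENNReal.ofReal (∫ z, foldedDensity v z ∂quadrant) := fun hv hvI => by
    rw [seminormSq_eq hv, ofReal_integral_eq_lintegral_ofReal hvI
      (Eventually.of_forall (foldedDensity_nonneg _))]
  have hnn : ∀ v : ℝ → ℝ, 0 ≤ ∫ z, foldedDensity v z ∂quadrant := fun v =>
    integral_nonneg (foldedDensity_nonneg v)
  change 0 ≤ D at hpos
  refine ⟨ENNReal.ofReal (4 * D), ?_, fun hδ x => ?_⟩
  · rw [conv hu hI, conv hp hIp, conv hm hIm, ← ENNReal.ofReal_add (hnn _) (hnn _),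
      ← ENNReal.ofReal_add (add_nonneg (hnn _) (hnn _)) (by positivity),
      show (2:ℝ≥0∞) = ENNReal.ofReal 2 by simp, ← ENNReal.ofReal_mul (by norm_num)]
    congr 1
    rw [hDe]; ring
  · have hD0 : D = 0 := le_antisymm (by have := ENNReal.ofReal_eq_zero.mp hδ; linarith) hpos
    have h := hzero hD0
    rcases lt_trichotomy x 0 with hx | hx | hx
    · have := h (-x) (by linarith)
      simp only [hg, neg_neg] at this; linarith
    · simp [hx]
    · have := h x hx
      simp only [hg] at this; linarith

/-! ### Odd reflection of phases -/

lemma mem_AA_iff {h d : ℝ} {φ : ℝ → ℝ} : φ ∈ AA h d ↔ ContDiff ℝ 1 φ ∧ energy h φ < ⊤ ∧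
    ∃ Lp ∈ limSet h, ∃ Lm ∈ limSet h, Tendsto φ atTop (𝓝 Lp) ∧ Tendsto φ atBot (𝓝 Lm) ∧
      (Lp - Lm) / (2 * π) = d := by
  constructor
  · rintro ⟨⟨h1, ⟨Lp, hp, hp'⟩, ⟨Lm, hm, hm'⟩, h4⟩, h5⟩
    refine ⟨h1, h4, Lp, hp, Lm, hm, hp', hm', ?_⟩
    rw [← h5, deg, hp'.limUnder_eq, hm'.limUnder_eq]
  · rintro ⟨h1, h4, Lp, hp, Lm, hm, hp', hm', h5⟩
    refine ⟨⟨h1, ⟨Lp, hp, hp'⟩, ⟨Lm, hm, hm'⟩, h4⟩, ?_⟩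
    rw [← h5, deg, hp'.limUnder_eq, hm'.limUnder_eq]

/-- The density of the exchange and anisotropy energy. -/
def localDensity (h : ℝ) (φ : ℝ → ℝ) (x : ℝ) : ℝ := (deriv φ x) ^ 2 + 2 * Wpot h (φ x)

lemma energy_eq (h : ℝ) (φ : ℝ → ℝ) : energy h φ =
    ENNReal.ofReal (1/2) * (∫⁻ x, ENNReal.ofReal (localDensity h φ x)) +
      ENNReal.ofReal (1/(4*π)) * seminormSq (fun x => cos (φ x)) := rfl

lemma continuous_Wpot (h : ℝ) : Continuous (Wpot h) := by
  unfold Wpot; fun_prop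

lemma Wpot_congr {h x y : ℝ} (hxy : cos x = cos y) : Wpot h x = Wpot h y := by
  simp only [Wpot, hxy]

lemma Wpot_nonneg (h x : ℝ) : 0 ≤ Wpot h x := by
  unfold Wpot kparam
  rcases le_total h 1 with h1 | h1
  · rw [min_eq_left h1]; nlinarith [sq_nonneg (cos x - h)]
  · rw [min_eq_right h1]
    nlinarith [cos_le_one x, neg_one_le_cos x,
      mul_nonneg (sub_nonneg.mpr (cos_le_one x)) (by linarith [cos_le_one x] : 0 ≤ 2*h - 1 - cos x)]

lemma continuous_localDensity {h : ℝ} {φ : ℝ → ℝ} (hφ : ContDiff ℝ 1 φ) :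
    Continuous (localDensity h φ) := by
  have h1 := hφ.continuous_deriv le_rfl
  have h2 := (continuous_Wpot h).comp hφ.continuous
  unfold localDensity
  exact (h1.pow 2).add (continuous_const.mul h2)

lemma localDensity_nonneg (h : ℝ) (φ : ℝ → ℝ) (x : ℝ) : 0 ≤ localDensity h φ x := by
  have := Wpot_nonneg h (φ x)
  unfold localDensity; positivity

/-- The phase obtained by keeping `φ` on `[0, ∞)` and extending it by odd reflection about the
point `(0, c)`. -/
def oddExtend (c : ℝ) (φ : ℝ → ℝ) (x : ℝ) : ℝ := if 0 ≤ x then φ x else 2 * c - φ (-x)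

/-- The point reflection of the graph of `φ` in `(0, c)`. -/
def pointReflect (c : ℝ) (φ : ℝ → ℝ) (x : ℝ) : ℝ := 2 * c - φ (-x)

lemma hasDerivAt_pointReflect {c : ℝ} {φ : ℝ → ℝ} (hφ : ContDiff ℝ 1 φ) (x : ℝ) :
    HasDerivAt (pointReflect c φ) (deriv φ (-x)) x := by
  have h1 : HasDerivAt φ (deriv φ (-x)) (-x) :=
    ((hφ.differentiable one_ne_zero) _).hasDerivAt
  have h2 := (h1.comp x (hasDerivAt_neg x)).const_sub (2 * c)
  have e : pointReflect c φ = fun y => 2 * c - (φ ∘ Neg.neg) y := rfl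
  rw [e]
  simpa using h2

lemma contDiff_one_of_hasDerivAt {f f' : ℝ → ℝ} (h : ∀ x, HasDerivAt f (f' x) x)
    (hc : Continuous f') : ContDiff ℝ 1 f := by
  rw [contDiff_one_iff_deriv]
  refine ⟨fun x => (h x).differentiableAt, ?_⟩
  rwa [show deriv f = f' from funext fun x => (h x).deriv]

lemma contDiff_pointReflect {c : ℝ} {φ : ℝ → ℝ} (hφ : ContDiff ℝ 1 φ) :
    ContDiff ℝ 1 (pointReflect c φ) :=
  contDiff_one_of_hasDerivAt (hasDerivAt_pointReflect hφ)
    ((hφ.continuous_deriv le_rfl).comp continuous_neg)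

lemma hasDerivAt_oddExtend {c : ℝ} {φ : ℝ → ℝ} (hφ : ContDiff ℝ 1 φ) (h0 : φ 0 = c) (x : ℝ) :
    HasDerivAt (oddExtend c φ) (deriv φ |x|) x := by
  have hd : ∀ y, HasDerivAt φ (deriv φ y) y := fun y =>
    ((hφ.differentiable one_ne_zero) y).hasDerivAt
  have hd' := hasDerivAt_pointReflect (c := c) hφ
  rcases lt_trichotomy x 0 with hx | rfl | hx
  · rw [abs_of_neg hx]
    refine (hd' x).congr_of_eventuallyEq ?_
    filter_upwards [gt_mem_nhds hx] with y hy
    simp [oddExtend, pointReflect, not_le.mpr hy]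
  · rw [abs_zero]
    have h1 : HasDerivWithinAt (oddExtend c φ) (deriv φ 0) (Set.Ici 0) 0 := by
      refine (hd 0).hasDerivWithinAt.congr (fun y hy => ?_) ?_
      · simp [oddExtend, Set.mem_Ici.mp hy]
      · simp [oddExtend]
    have h2 : HasDerivWithinAt (oddExtend c φ) (deriv φ 0) (Set.Iic 0) 0 := by
      have := (hd' 0).hasDerivWithinAt (s := Set.Iic 0)
      rw [neg_zero] at this
      refine this.congr (fun y hy => ?_) ?_
      · rcases (Set.mem_Iic.mp hy).lt_or_eq with hy | rfl
        · simp [oddExtend, pointReflect, not_le.mpr hy]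
        · simp [oddExtend, pointReflect, h0]; ring
      · simp [oddExtend, pointReflect, h0]; ring
    have := h1.union h2
    rwa [Set.Ici_union_Iic, hasDerivWithinAt_univ] at this
  · rw [abs_of_pos hx]
    refine (hd x).congr_of_eventuallyEq ?_
    filter_upwards [lt_mem_nhds hx] with y hy
    simp [oddExtend, hy.le]

lemma contDiff_oddExtend {c : ℝ} {φ : ℝ → ℝ} (hφ : ContDiff ℝ 1 φ) (h0 : φ 0 = c) :
    ContDiff ℝ 1 (oddExtend c φ) :=
  contDiff_one_of_hasDerivAt (hasDerivAt_oddExtend hφ h0)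
    ((hφ.continuous_deriv le_rfl).comp continuous_abs)

lemma cos_two_mul_sub {c : ℝ} (hc : ∃ M : ℤ, c = M * π) (x : ℝ) : cos (2 * c - x) = cos x := by
  obtain ⟨M, rfl⟩ := hc
  rw [show 2 * (M * π) - x = M * (2 * π) - x by ring, Real.cos_int_mul_two_pi_sub]

lemma sin_two_mul_sub {c : ℝ} (hc : ∃ M : ℤ, c = M * π) (x : ℝ) : sin (2 * c - x) = - sin x := by
  obtain ⟨M, rfl⟩ := hc
  rw [show 2 * (M * π) - x = M * (2 * π) - x by ring, Real.sin_int_mul_two_pi_sub]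

lemma cos_oddExtend {c : ℝ} (hc : ∃ M : ℤ, c = M * π)
    (φ : ℝ → ℝ) (x : ℝ) : cos (oddExtend c φ x) = cos (φ |x|) := by
  unfold oddExtend
  split_ifs with hx
  · rw [abs_of_nonneg hx]
  · rw [abs_of_neg (not_le.mp hx), cos_two_mul_sub hc]

lemma sin_oddExtend_neg {c : ℝ} (hc : ∃ M : ℤ, c = M * π) {φ : ℝ → ℝ} (h0 : φ 0 = c) (x : ℝ) :
    sin (oddExtend c φ (-x)) = - sin (oddExtend c φ x) := by
  rcases lt_trichotomy x 0 with hx | rfl | hx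
  · rw [oddExtend, oddExtend, if_pos (by linarith), if_neg (by linarith), sin_two_mul_sub hc,
      neg_neg]
  · obtain ⟨M, rfl⟩ := hc
    simp [oddExtend, h0]
  · rw [oddExtend, oddExtend, if_neg (by linarith), if_pos hx.le, sin_two_mul_sub hc, neg_neg]

lemma localDensity_pointReflect {c : ℝ} (hc : ∃ M : ℤ, c = M * π)
    {φ : ℝ → ℝ} (hφ : ContDiff ℝ 1 φ) (h x : ℝ) :
    localDensity h (pointReflect c φ) x = localDensity h φ (-x) := by
  rw [localDensity, localDensity, (hasDerivAt_pointReflect hφ x).deriv,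
    Wpot_congr (show cos (pointReflect c φ x) = cos (φ (-x)) from cos_two_mul_sub hc (φ (-x)))]

lemma localDensity_oddExtend {c : ℝ} (hc : ∃ M : ℤ, c = M * π)
    {φ : ℝ → ℝ} (hφ : ContDiff ℝ 1 φ) (h0 : φ 0 = c) (h x : ℝ) :
    localDensity h (oddExtend c φ) x = localDensity h φ |x| := by
  rw [localDensity, localDensity, (hasDerivAt_oddExtend hφ h0 x).deriv,
    Wpot_congr (cos_oddExtend hc φ x)]

lemma energy_oddExtend {c : ℝ} (hc : ∃ M : ℤ, c = M * π)
    {φ : ℝ → ℝ} (hφ : ContDiff ℝ 1 φ) (h0 : φ 0 = c) (h : ℝ) :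
    energy h (oddExtend c φ) = ENNReal.ofReal (1/2) *
        (2 * ∫⁻ x in Set.Ioi (0:ℝ), ENNReal.ofReal (localDensity h φ x)) +
      ENNReal.ofReal (1/(4*π)) * seminormSq (fun x => cos (φ |x|)) := by
  rw [energy_eq]
  congr 2
  · rw [lintegral_eq_halfline
      (continuous_localDensity (contDiff_oddExtend hφ h0)).measurable.ennreal_ofReal,
      ← lintegral_const_mul _ (continuous_localDensity hφ).measurable.ennreal_ofReal]
    refine setLIntegral_congr_fun measurableSet_Ioi fun x hx => ?_
    simp only [localDensity_oddExtend hc hφ h0, abs_neg, abs_of_pos (Set.mem_Ioi.mp hx), two_mul]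
  · simp only [cos_oddExtend hc]

/-- Keeping either half of a phase through `(0, c)` and reflecting it yields two phases whose
energies average to at most the original energy, strictly less unless `cos φ` is even. -/
lemma energy_reflect {c : ℝ} (hc : ∃ M : ℤ, c = M * π)
    {h : ℝ} {φ : ℝ → ℝ} (hφ : ContDiff ℝ 1 φ) (h0 : φ 0 = c)
    (hfin : energy h φ < ⊤) :
    ∃ δ : ℝ≥0∞, energy h (oddExtend c φ) + energy h (oddExtend c (pointReflect c φ)) + δ
      = 2 * energy h φ ∧ (δ = 0 → ∀ x, cos (φ (-x)) = cos (φ x)) := by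
  have hc1 : ENNReal.ofReal (1/(4*π)) ≠ 0 := by
    rw [Ne, ENNReal.ofReal_eq_zero, not_le]; positivity
  have hcφ : Continuous fun x => cos (φ x) := continuous_cos.comp hφ.continuous
  have hN : seminormSq (fun x => cos (φ x)) ≠ ⊤ := by
    intro hN
    rw [energy_eq, hN, ENNReal.mul_top hc1] at hfin
    simp at hfin
  obtain ⟨δ, hδ, hδ'⟩ := seminormSq_reflect hcφ (fun x => abs_cos_le_one _) hN
  refine ⟨ENNReal.ofReal (1/(4*π)) * δ, ?_, fun h => hδ' ((mul_eq_zero.mp h).resolve_left hc1)⟩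
  have h0' : pointReflect c φ 0 = c := by simp [pointReflect, h0]; ring
  rw [energy_oddExtend hc hφ h0, energy_oddExtend hc (contDiff_pointReflect hφ) h0', energy_eq,
    lintegral_eq_halfline (continuous_localDensity hφ).measurable.ennreal_ofReal,
    lintegral_add_left (continuous_localDensity hφ).measurable.ennreal_ofReal]
  simp only [localDensity_pointReflect hc hφ]
  have e : (fun x => cos (pointReflect c φ |x|)) = fun x => cos (φ (-|x|)) :=
    funext fun x => cos_two_mul_sub hc _
  rw [e, mul_add, mul_left_comm 2 (ENNReal.ofReal (1/(4*π))), ← hδ]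
  ring

lemma oddExtend_mem_AA {h c d : ℝ} {φ : ℝ → ℝ} (hφ : ContDiff ℝ 1 φ) (h0 : φ 0 = c)
    (hfin : energy h (oddExtend c φ) < ⊤) {Lp Lm : ℝ} (hp : Lp ∈ limSet h) (hm : Lm ∈ limSet h)
    (hp' : Tendsto φ atTop (𝓝 Lp)) (hL : Lp + Lm = 2 * c) (hd : (Lp - Lm) / (2 * π) = d) :
    oddExtend c φ ∈ AA h d := by
  refine mem_AA_iff.mpr ⟨contDiff_oddExtend hφ h0, hfin, Lp, hp, Lm, hm, ?_, ?_, hd⟩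
  · refine hp'.congr' ?_
    filter_upwards [eventually_ge_atTop 0] with x hx
    simp [oddExtend, hx]
  · have h1 : Tendsto (fun x => 2 * c - φ (-x)) atBot (𝓝 (2 * c - Lp)) :=
      tendsto_const_nhds.sub (hp'.comp tendsto_neg_atBot_atTop)
    rw [show 2 * c - Lp = Lm by linarith] at h1
    refine h1.congr' ?_
    filter_upwards [eventually_lt_atBot 0] with x hx
    simp [oddExtend, hx]

/-- The midpoint of the two limits of a phase of winding number in `ℤ ± α/π` lies in `πℤ`. -/
lemma exists_midpoint {h d Lp Lm : ℝ}
    (hd : ∃ n : ℤ, d = n + alphaParam h / π ∨ d = n - alphaParam h / π)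
    (h0 : 0 ≤ h) (hp : Lp ∈ limSet h) (hm : Lm ∈ limSet h) (hL : (Lp - Lm) / (2 * π) = d) :
    ∃ M : ℤ, (Lp + Lm) / 2 = M * π := by
  have hπ := pi_pos
  have ha0 : 0 ≤ alphaParam h := arccos_nonneg _
  have ha1 : alphaParam h ≤ π / 2 := by
    rw [alphaParam, arccos_le_pi_div_two]; exact le_min h0 zero_le_one
  set α := alphaParam h
  have hL' : Lp - Lm = 2 * π * d := by rw [← hL]; field_simp
  -- equal signs in front of `α` force `α ∈ πℤ`, hence `α = 0`
  have key : ∀ n₁ n₂ n : ℤ, (2 * π * n₁ - 2 * π * n₂ = 2 * π * (n + α / π) ∨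
      2 * π * n₁ - 2 * π * n₂ = 2 * π * (n - α / π)) → α = 0 := by
    intro n₁ n₂ n hn
    have h1 : α = π * ((n₁ - n₂ - n : ℤ) : ℝ) ∨ α = -(π * ((n₁ - n₂ - n : ℤ) : ℝ)) := by
      push_cast
      rcases hn with hn | hn
      · left; field_simp at hn; linarith
      · right; field_simp at hn; linarith
    generalize n₁ - n₂ - n = j at h1
    have hj : j = 0 := by
      by_contra hj
      have : (1:ℝ) ≤ |(j:ℝ)| := by exact_mod_cast Int.one_le_abs hj
      have h2 : |α| = π * |(j:ℝ)| := by
        rcases h1 with h1 | h1 <;> rw [h1] <;> simp [abs_mul, abs_of_pos hπ]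
      rw [abs_of_nonneg ha0] at h2
      nlinarith
    simpa [hj] using h1
  obtain ⟨n₁, h1⟩ := hp
  obtain ⟨n₂, h2⟩ := hm
  obtain ⟨n, hn⟩ := hd
  refine ⟨n₁ + n₂, ?_⟩
  push_cast
  rcases h1 with h1 | h1 <;> rcases h2 with h2 | h2
  · have : α = 0 := key n₁ n₂ n (by
      rcases hn with hn | hn
      · left; rw [← hn]; linarith
      · right; rw [← hn]; linarith)
    rw [h1, h2]; linarith
  · rw [h1, h2]; ring
  · rw [h1, h2]; ring
  · have : α = 0 := key n₁ n₂ n (by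
      rcases hn with hn | hn
      · left; rw [← hn]; linarith
      · right; rw [← hn]; linarith)
    rw [h1, h2]; linarith

/-- If the two limits coincide, the constant phase is a competitor of zero energy. -/
lemma const_mem_AA {h d L : ℝ} (h0 : 0 ≤ h) (hL : L ∈ limSet h) (hd : (L - L) / (2 * π) = d) :
    energy h (fun _ => L) = 0 ∧ (fun _ => L) ∈ AA h d := by
  have hk0 : 0 ≤ kparam h := le_min h0 zero_le_one
  have hk1 : kparam h ≤ 1 := min_le_right _ _
  have hcos : cos L = kparam h := by
    obtain ⟨n, rfl | rfl⟩ := hL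
    · rw [add_comm, mul_comm (2 * π), Real.cos_add_int_mul_two_pi, alphaParam,
        cos_arccos (by linarith) hk1]
    · rw [mul_comm (2 * π), Real.cos_int_mul_two_pi_sub, alphaParam,
        cos_arccos (by linarith) hk1]
  have hE : energy h (fun _ => L) = 0 := by
    have : Wpot h L = 0 := by rw [Wpot, hcos]; ring
    simp [energy, this]
  refine ⟨hE, mem_AA_iff.mpr ⟨contDiff_const, by simp [hE], L, hL, L, hL,
    tendsto_const_nhds, tendsto_const_nhds, hd⟩⟩

/-! ### The nonlocal pairing with a test function -/

lemma deriv_eq_zero_outside {f : ℝ → ℝ} {a b : ℝ} (hf : ∀ x, x ∉ Set.Icc a b → f x = 0)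
    (x : ℝ) (hx : x ∉ Set.Icc a b) : deriv f x = 0 := by
  have : f =ᶠ[𝓝 x] fun _ => 0 := by
    filter_upwards [isClosed_Icc.isOpen_compl.mem_nhds hx] with y hy using hf y hy
  rw [this.deriv_eq, deriv_const]

lemma integrable_of_outside {f : ℝ → ℝ} (hc : Continuous f) {a b : ℝ}
    (hf : ∀ x, x ∉ Set.Icc a b → f x = 0) : Integrable f :=
  hc.integrable_of_hasCompactSupport (HasCompactSupport.intro isCompact_Icc hf)

lemma lintegral_enorm_shift_sub_le {q : ℝ → ℝ} (hq : ContDiff ℝ 1 q) (z : ℝ) :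
    ∫⁻ s, ‖q s - q (s + z)‖ₑ ≤ ‖z‖ₑ * ∫⁻ s, ‖deriv q s‖ₑ := by
  have hc := hq.continuous_deriv le_rfl
  have hpt : ∀ s, ‖q s - q (s + z)‖ₑ
      ≤ ∫⁻ τ in Set.Ioc (0:ℝ) 1, ‖z‖ₑ * ‖deriv q (s + τ * z)‖ₑ := by
    intro s
    have hd : ∀ τ ∈ Set.uIcc (0:ℝ) 1,
        HasDerivAt (fun τ => q (s + τ * z)) (z * deriv q (s + τ * z)) τ := by
      intro τ _
      have h1 : HasDerivAt q (deriv q (s + τ * z)) (s + τ * z) :=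
        ((hq.differentiable one_ne_zero) _).hasDerivAt
      have h2 : HasDerivAt (fun τ : ℝ => s + τ * z) z τ := by
        simpa using ((hasDerivAt_id τ).mul_const z).const_add s
      simpa [Function.comp_def, mul_comm] using h1.comp τ h2
    have := intervalIntegral.integral_eq_sub_of_hasDerivAt hd
      (Continuous.intervalIntegrable (by fun_prop) _ _)
    simp only [one_mul, zero_mul, add_zero] at this
    rw [← enorm_neg, neg_sub, ← this, intervalIntegral.integral_of_le zero_le_one]
    refine (enorm_integral_le_lintegral_enorm _).trans (le_of_eq ?_)
    simp only [enorm_mul]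
  have hm : Measurable (Function.uncurry fun s τ => ‖z‖ₑ * ‖deriv q (s + τ * z)‖ₑ) := by
    have := hc.measurable
    simp only [Function.uncurry_def]; fun_prop
  have hcm := hc.measurable
  calc ∫⁻ s, ‖q s - q (s + z)‖ₑ
      ≤ ∫⁻ s, ∫⁻ τ in Set.Ioc (0:ℝ) 1, ‖z‖ₑ * ‖deriv q (s + τ * z)‖ₑ := lintegral_mono hpt
    _ = ∫⁻ τ in Set.Ioc (0:ℝ) 1, ∫⁻ s, ‖z‖ₑ * ‖deriv q (s + τ * z)‖ₑ :=
        lintegral_lintegral_swap hm.aemeasurable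
    _ = ∫⁻ τ in Set.Ioc (0:ℝ) 1, ‖z‖ₑ * ∫⁻ s, ‖deriv q s‖ₑ := by
        refine lintegral_congr fun τ => ?_
        rw [lintegral_const_mul _ (by fun_prop),
          lintegral_add_right_eq_self (fun s => ‖deriv q s‖ₑ)]
    _ = _ := by simp

lemma lintegral_enorm_le_deriv {q : ℝ → ℝ} (hq : ContDiff ℝ 1 q) {a : ℝ}
    (hs : ∀ x, x ∉ Set.Icc (a - 1) (a + 1) → q x = 0) :
    ∫⁻ s, ‖q s‖ₑ ≤ 2 * ∫⁻ s, ‖deriv q s‖ₑ := by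
  have hc := hq.continuous_deriv le_rfl
  have hpt : ∀ x, ‖q x‖ₑ ≤ ∫⁻ s, ‖deriv q s‖ₑ := by
    intro x
    have h0 : q (min (a - 2) x) = 0 := hs _ fun h => by
      have := h.1.trans (min_le_left _ _); linarith
    have := intervalIntegral.integral_eq_sub_of_hasDerivAt
      (fun y (_ : y ∈ Set.uIcc (min (a - 2) x) x) =>
        ((hq.differentiable one_ne_zero) y).hasDerivAt) (hc.intervalIntegrable _ _)
    rw [h0, sub_zero, intervalIntegral.integral_of_le (min_le_right _ _)] at this
    rw [← this]
    exact (enorm_integral_le_lintegral_enorm _).trans (setLIntegral_le_lintegral _ _)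
  have hind : ∀ x, ‖q x‖ₑ
      ≤ (Set.Icc (a - 1) (a + 1)).indicator (fun _ => ∫⁻ s, ‖deriv q s‖ₑ) x := by
    intro x
    by_cases hx : x ∈ Set.Icc (a - 1) (a + 1)
    · rw [Set.indicator_of_mem hx]; exact hpt x
    · simp [hs x hx]
  refine (lintegral_mono hind).trans (le_of_eq ?_)
  rw [lintegral_indicator measurableSet_Icc, setLIntegral_const, Real.volume_Icc, mul_comm]
  congr 1
  rw [show a + 1 - (a - 1) = 2 by ring]; simp

/-- The `H^{1/2}` pairing of a bounded, locally Lipschitz function with a compactly supported `C¹`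
function is controlled by the total variation of the latter. -/
lemma pairing_le {v q : ℝ → ℝ} (hv : Continuous v) (hq : ContDiff ℝ 1 q) {a K : ℝ} (hK : 0 ≤ K)
    (hs : ∀ x, x ∉ Set.Icc (a - 1) (a + 1) → q x = 0) (hb : ∀ s t, |v s - v t| ≤ 4)
    (hL : ∀ s ∈ Set.Icc (a - 2) (a + 2), ∀ t ∈ Set.Icc (a - 2) (a + 2),
      |v s - v t| ≤ K * |s - t|) :
    ∫⁻ s, ∫⁻ t, ENNReal.ofReal (|v s - v t| * |q s - q t| / (s - t) ^ 2)
      ≤ ENNReal.ofReal ((2 * K + 32) * π) * ∫⁻ s, ‖deriv q s‖ₑ := by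
  have hvm := hv.measurable
  have hqm := hq.continuous.measurable
  set T := ∫⁻ s, ‖deriv q s‖ₑ with hT
  let f : ℝ → ℝ → ℝ≥0∞ := fun s z =>
    ENNReal.ofReal (|v s - v (s + z)| * |q s - q (s + z)| / z ^ 2)
  have hfm : Measurable (Function.uncurry f) := by
    have e : Function.uncurry f = fun p : ℝ × ℝ => ENNReal.ofReal
      (‖v p.1 - v (p.1 + p.2)‖ * ‖q p.1 - q (p.1 + p.2)‖ / p.2 ^ 2) := rfl
    rw [e]; fun_prop
  have e1 : ∫⁻ s, ∫⁻ t, ENNReal.ofReal (|v s - v t| * |q s - q t| / (s - t) ^ 2)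
      = ∫⁻ z, ∫⁻ s, f s z := by
    rw [← lintegral_lintegral_swap hfm.aemeasurable]
    refine lintegral_congr fun s => ?_
    rw [← lintegral_add_left_eq_self _ s]
    refine lintegral_congr fun z => ?_
    simp only [f]
    rw [show (s - (s + z)) ^ 2 = z ^ 2 by ring]
  have hz : ∀ z, ∫⁻ s, f s z ≤ ENNReal.ofReal ((2 * K + 32) * (1 + z ^ 2)⁻¹) * T := by
    intro z
    have hqz : Measurable fun s => ‖q s - q (s + z)‖ₑ := by fun_prop
    -- any pointwise bound `c` on the weight reduces matters to the `L¹` modulus of `q`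
    have hgen : ∀ c : ℝ, 0 ≤ c → (∀ s, q s - q (s + z) ≠ 0 → |v s - v (s + z)| / z ^ 2 ≤ c) →
        ∫⁻ s, f s z ≤ ENNReal.ofReal c * ∫⁻ s, ‖q s - q (s + z)‖ₑ := by
      intro c hc h
      rw [← lintegral_const_mul _ hqz]
      refine lintegral_mono fun s => ?_
      rw [Real.enorm_eq_ofReal_abs, ← ENNReal.ofReal_mul hc]
      refine ENNReal.ofReal_le_ofReal ?_
      by_cases h0 : q s - q (s + z) = 0
      · simp [h0]
      · rw [mul_div_right_comm]
        exact mul_le_mul_of_nonneg_right (h s h0) (abs_nonneg _)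
    rcases lt_or_ge |z| 1 with h1 | h1
    · rcases eq_or_ne z 0 with rfl | hz0
      · simp [f]
      have hzp : 0 < |z| := abs_pos.mpr hz0
      have := hgen (K / |z|) (by positivity) (fun s h0 => by
        have hmem : s ∈ Set.Icc (a - 2) (a + 2) ∧ s + z ∈ Set.Icc (a - 2) (a + 2) := by
          have hz' := abs_lt.mp h1
          by_cases h2 : s ∈ Set.Icc (a - 1) (a + 1)
          · exact ⟨⟨by linarith [h2.1], by linarith [h2.2]⟩,
              ⟨by linarith [h2.1], by linarith [h2.2]⟩⟩
          · by_cases h3 : s + z ∈ Set.Icc (a - 1) (a + 1)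
            · exact ⟨⟨by linarith [h3.1], by linarith [h3.2]⟩,
                ⟨by linarith [h3.1], by linarith [h3.2]⟩⟩
            · exact absurd (by rw [hs _ h2, hs _ h3, sub_zero]) h0
        have := hL s hmem.1 (s + z) hmem.2
        rw [show s - (s + z) = -z by ring, abs_neg] at this
        rw [← sq_abs z, div_le_div_iff₀ (by positivity) hzp]
        nlinarith)
      refine this.trans ?_
      calc ENNReal.ofReal (K / |z|) * ∫⁻ s, ‖q s - q (s + z)‖ₑ
          ≤ ENNReal.ofReal (K / |z|) * (‖z‖ₑ * T) :=
            mul_le_mul_right (lintegral_enorm_shift_sub_le hq z) _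
        _ = ENNReal.ofReal K * T := by
            rw [Real.enorm_eq_ofReal_abs, ← mul_assoc, ← ENNReal.ofReal_mul (by positivity),
              div_mul_cancel₀ _ hzp.ne']
        _ ≤ _ := by
            refine mul_le_mul_left (ENNReal.ofReal_le_ofReal ?_) _
            have : z ^ 2 < 1 := by rw [← sq_abs]; nlinarith
            rw [← div_eq_mul_inv, le_div_iff₀ (by positivity)]
            nlinarith
    · have := hgen (4 / z ^ 2) (by positivity) (fun s _ =>
        div_le_div_of_nonneg_right (hb _ _) (sq_nonneg _))
      refine this.trans ?_
      have hz2 : 1 ≤ z ^ 2 := by rw [← sq_abs]; nlinarith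
      have h4 : ∫⁻ s, ‖q s - q (s + z)‖ₑ ≤ ENNReal.ofReal 4 * T := by
        calc ∫⁻ s, ‖q s - q (s + z)‖ₑ ≤ ∫⁻ s, (‖q s‖ₑ + ‖q (s + z)‖ₑ) :=
              lintegral_mono fun s => enorm_sub_le
          _ = (∫⁻ s, ‖q s‖ₑ) + ∫⁻ s, ‖q s‖ₑ := by
              rw [lintegral_add_left (by fun_prop),
                lintegral_add_right_eq_self (fun s => ‖q s‖ₑ)]
          _ ≤ 2 * T + 2 * T := add_le_add (lintegral_enorm_le_deriv hq hs)
              (lintegral_enorm_le_deriv hq hs)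
          _ = _ := by
              rw [← add_mul]; congr 1
              rw [show (4:ℝ) = 2 + 2 by norm_num, ENNReal.ofReal_add] <;> simp
      calc _ ≤ ENNReal.ofReal (4 / z ^ 2) * (ENNReal.ofReal 4 * T) := mul_le_mul_right h4 _
        _ = ENNReal.ofReal (4 / z ^ 2 * 4) * T := by
            rw [← mul_assoc, ← ENNReal.ofReal_mul (by positivity)]
        _ ≤ _ := by
            refine mul_le_mul_left (ENNReal.ofReal_le_ofReal ?_) _
            rw [← div_eq_mul_inv, div_mul_eq_mul_div, div_le_div_iff₀ (by positivity)
              (by positivity)]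
            nlinarith
  rw [e1]
  refine (lintegral_mono hz).trans (le_of_eq ?_)
  have hint : Integrable fun z : ℝ => (2 * K + 32) * (1 + z ^ 2)⁻¹ :=
    integrable_inv_one_add_sq.const_mul _
  rw [lintegral_mul_const _ (by fun_prop), ← ofReal_integral_eq_lintegral_ofReal hint
    (Eventually.of_forall fun z => by positivity), integral_const_mul, integral_univ_inv_one_add_sq]

/-! ### The Euler–Lagrange inequality -/

lemma integrable_localDensity {h : ℝ} {φ : ℝ → ℝ} (hφ : ContDiff ℝ 1 φ) (hfin : energy h φ < ⊤) :
    Integrable (localDensity h φ) := by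
  refine ⟨(continuous_localDensity hφ).aestronglyMeasurable, ?_⟩
  rw [hasFiniteIntegral_iff_ofReal (Eventually.of_forall (localDensity_nonneg h φ))]
  rw [energy_eq] at hfin
  by_contra hcon
  rw [not_lt, top_le_iff] at hcon
  rw [hcon, ENNReal.mul_top (by simp), top_add] at hfin
  exact lt_irrefl _ hfin

lemma seminormSq_lt_top {h : ℝ} {φ : ℝ → ℝ} (hfin : energy h φ < ⊤) :
    seminormSq (fun x => cos (φ x)) < ⊤ := by
  rw [energy_eq] at hfin
  by_contra hcon
  rw [not_lt, top_le_iff] at hcon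
  rw [hcon, ENNReal.mul_top (by simp [pi_pos]), add_top] at hfin
  exact lt_irrefl _ hfin

lemma cos_lipschitz_of_deriv {φ : ℝ → ℝ} (hφ : ContDiff ℝ 1 φ) {a b K : ℝ}
    (hK : ∀ x ∈ Set.Icc a b, |deriv φ x| ≤ K) (s : ℝ) (hs : s ∈ Set.Icc a b) (t : ℝ)
    (ht : t ∈ Set.Icc a b) : |cos (φ s) - cos (φ t)| ≤ K * |s - t| := by
  have hd : ∀ x ∈ Set.Icc a b, HasDerivWithinAt (fun x => cos (φ x)) (-sin (φ x) * deriv φ x)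
      (Set.Icc a b) x := fun x _ =>
    (((hφ.differentiable one_ne_zero) x).hasDerivAt.cos).hasDerivWithinAt
  have hb : ∀ x ∈ Set.Icc a b, ‖-sin (φ x) * deriv φ x‖ ≤ K := by
    intro x hx
    rw [norm_mul, norm_neg, Real.norm_eq_abs, Real.norm_eq_abs]
    have := hK x hx
    have h1 := abs_sin_le_one (φ x)
    nlinarith [abs_nonneg (sin (φ x)), abs_nonneg (deriv φ x)]
  have := (convex_Icc a b).norm_image_sub_le_of_norm_hasDerivWithin_le hd hb ht hs
  simpa [Real.norm_eq_abs] using this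

/-- Comparison with a compactly supported perturbation: up to a multiple of the total variation of
the change of `cos φ`, only the exchange energy matters. The nonlocal contribution is estimated by
`(Δ cos ψ)² ≤ (Δ cos φ)² + |Δ(cos ψ - cos φ)| |Δ(cos ψ + cos φ)|`. -/
lemma exchange_comparison {h : ℝ} (h0 : 0 ≤ h) {φ ψ : ℝ → ℝ} (hφ : ContDiff ℝ 1 φ)
    (hψ : ContDiff ℝ 1 ψ) (hfin : energy h φ < ⊤) (hle : energy h φ ≤ energy h ψ) {a K : ℝ}
    (hK : 0 ≤ K) (hs : ∀ x, x ∉ Set.Icc (a - 1) (a + 1) → ψ x = φ x)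
    (hKφ : ∀ x ∈ Set.Icc (a - 2) (a + 2), |deriv φ x| ≤ K)
    (hKψ : ∀ x ∈ Set.Icc (a - 2) (a + 2), |deriv ψ x| ≤ K) :
    0 ≤ 1 / 2 * (∫ x, (deriv ψ x ^ 2 - deriv φ x ^ 2)) +
      (2 + 2 * h + 1 / (4 * π) * ((2 * (2 * K) + 32) * π)) *
        ∫ x, |deriv (fun x => cos (ψ x) - cos (φ x)) x| := by
  set q : ℝ → ℝ := fun x => cos (ψ x) - cos (φ x) with hqdef
  set v : ℝ → ℝ := fun x => cos (ψ x) + cos (φ x) with hvdef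
  have hcφ := hφ.continuous
  have hcψ := hψ.continuous
  have hq : ContDiff ℝ 1 q := hψ.cos.sub hφ.cos
  have hv : Continuous v := by simp only [hvdef]; fun_prop
  have hqs : ∀ x, x ∉ Set.Icc (a - 1) (a + 1) → q x = 0 := fun x hx => by
    simp [hqdef, hs x hx]
  have hq' := hq.continuous_deriv le_rfl
  have hqi : Integrable q := integrable_of_outside hq.continuous hqs
  have hqi' : Integrable (deriv q) := integrable_of_outside hq' (deriv_eq_zero_outside hqs)
  have hT : ∫⁻ x, ‖deriv q x‖ₑ = ENNReal.ofReal (∫ x, |deriv q x|) := by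
    rw [← ofReal_integral_norm_eq_lintegral_enorm hqi']; rfl
  have hT0 : 0 ≤ ∫ x, |deriv q x| := integral_nonneg fun _ => abs_nonneg _
  set T := ∫ x, |deriv q x| with hTdef
  have hq1 : ∫ x, |q x| ≤ 2 * T := by
    have h1 := lintegral_enorm_le_deriv hq hqs
    rw [hT, ← ofReal_integral_norm_eq_lintegral_enorm hqi] at h1
    have h2 : ENNReal.ofReal (∫ x, ‖q x‖) ≤ ENNReal.ofReal (2 * T) := by
      rw [ENNReal.ofReal_mul two_pos.le]; simpa using h1
    exact (ENNReal.ofReal_le_ofReal_iff (by positivity)).mp h2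
  have hP := pairing_le (v := v) (q := q) (K := 2 * K) hv hq (by positivity) hqs
    (fun s t => by
      simp only [hvdef]
      rw [abs_le]
      constructor <;> linarith [cos_le_one (ψ s), cos_le_one (φ s), cos_le_one (ψ t),
        cos_le_one (φ t), neg_one_le_cos (ψ s), neg_one_le_cos (φ s), neg_one_le_cos (ψ t),
        neg_one_le_cos (φ t)])
    (fun s hs t ht => by
      have h1 := cos_lipschitz_of_deriv hφ hKφ s hs t ht
      have h2 := cos_lipschitz_of_deriv hψ hKψ s hs t ht
      simp only [hvdef]
      calc |cos (ψ s) + cos (φ s) - (cos (ψ t) + cos (φ t))|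
          = |(cos (ψ s) - cos (ψ t)) + (cos (φ s) - cos (φ t))| := by ring_nf
        _ ≤ _ := abs_add_le _ _
        _ ≤ 2 * K * |s - t| := by linarith)
  rw [hT, ← ENNReal.ofReal_mul (by positivity)] at hP
  have hS : seminormSq (fun x => cos (ψ x)) ≤ seminormSq (fun x => cos (φ x)) +
      ENNReal.ofReal ((2 * (2 * K) + 32) * π * T) := by
    refine le_trans ?_ (add_le_add_right hP _)
    unfold seminormSq
    have hvm := hv.measurable
    have hqm := hq.continuous.measurable
    have hm : Measurable (Function.uncurry fun s t =>
        ENNReal.ofReal ((cos (φ s) - cos (φ t)) ^ 2 / (s - t) ^ 2)) := by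
      have := hcφ.measurable
      simp only [Function.uncurry_def]; fun_prop
    rw [← lintegral_add_left hm.lintegral_prod_right]
    refine lintegral_mono fun s => ?_
    have hms : Measurable fun t => ENNReal.ofReal ((cos (φ s) - cos (φ t)) ^ 2 / (s - t) ^ 2) := by
      have := hcφ.measurable
      fun_prop
    change _ ≤ (∫⁻ t, ENNReal.ofReal ((cos (φ s) - cos (φ t)) ^ 2 / (s - t) ^ 2)) + _
    rw [← lintegral_add_left hms]
    refine lintegral_mono fun t => ?_
    change _ ≤ ENNReal.ofReal _ + ENNReal.ofReal _
    rw [← ENNReal.ofReal_add (by positivity) (by positivity), ← add_div]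
    refine ENNReal.ofReal_le_ofReal (div_le_div_of_nonneg_right ?_ (sq_nonneg _))
    have := le_abs_self ((v s - v t) * (q s - q t))
    rw [abs_mul] at this
    have e : (v s - v t) * (q s - q t) =
        (cos (ψ s) - cos (ψ t)) ^ 2 - (cos (φ s) - cos (φ t)) ^ 2 := by
      simp only [hvdef, hqdef]; ring
    linarith
  have hder : ∀ x, x ∉ Set.Icc (a - 1) (a + 1) → deriv ψ x = deriv φ x := by
    intro x hx
    have : ψ =ᶠ[𝓝 x] φ := by
      filter_upwards [isClosed_Icc.isOpen_compl.mem_nhds hx] with y hy using hs y hy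
    exact this.deriv_eq
  have hcφ' := hφ.continuous_deriv le_rfl
  have hcψ' := hψ.continuous_deriv le_rfl
  have hg1 : Integrable fun x => deriv ψ x ^ 2 - deriv φ x ^ 2 :=
    integrable_of_outside (a := a - 1) (b := a + 1) (by fun_prop) fun x hx => by
      simp [hder x hx]
  have hg2 : Integrable fun x => q x * (v x - 2 * h) :=
    integrable_of_outside (a := a - 1) (b := a + 1) (hq.continuous.mul (by fun_prop))
      fun x hx => by simp [hqs x hx]
  have hIφ := integrable_localDensity hφ hfin
  have hsplit : localDensity h ψ = fun x => localDensity h φ x +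
      ((deriv ψ x ^ 2 - deriv φ x ^ 2) + q x * (v x - 2 * h)) := by
    funext x
    simp only [localDensity, Wpot, hqdef, hvdef]; ring
  have hIψ : Integrable (localDensity h ψ) := by
    rw [hsplit]; exact hIφ.add (hg1.add hg2)
  have hval : ∫ x, localDensity h ψ x = (∫ x, localDensity h φ x) +
      ((∫ x, (deriv ψ x ^ 2 - deriv φ x ^ 2)) + ∫ x, q x * (v x - 2 * h)) := by
    rw [hsplit]
    exact (integral_add hIφ (hg1.add hg2)).trans (congrArg _ (integral_add hg1 hg2))
  have hqv : ∫ x, q x * (v x - 2 * h) ≤ (2 + 2 * h) * (2 * T) := by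
    calc ∫ x, q x * (v x - 2 * h) ≤ ∫ x, (2 + 2 * h) * |q x| := by
          refine integral_mono hg2 (hqi.abs.const_mul _) fun x => ?_
          refine (le_abs_self _).trans ?_
          rw [abs_mul, mul_comm]
          refine mul_le_mul_of_nonneg_right ?_ (abs_nonneg _)
          simp only [hvdef]
          rw [abs_le]
          constructor <;> linarith [cos_le_one (ψ x), cos_le_one (φ x), neg_one_le_cos (ψ x),
            neg_one_le_cos (φ x)]
      _ = (2 + 2 * h) * ∫ x, |q x| := integral_const_mul _ _
      _ ≤ _ := mul_le_mul_of_nonneg_left hq1 (by positivity)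
  rw [energy_eq, energy_eq,
    ← ofReal_integral_eq_lintegral_ofReal hIφ (Eventually.of_forall (localDensity_nonneg h φ)),
    ← ofReal_integral_eq_lintegral_ofReal hIψ (Eventually.of_forall (localDensity_nonneg h ψ))]
    at hle
  have hIψ0 : 0 ≤ ∫ x, localDensity h ψ x := integral_nonneg (localDensity_nonneg h ψ)
  have hfinal : ENNReal.ofReal (1 / 2) * ENNReal.ofReal (∫ x, localDensity h φ x) ≤
      ENNReal.ofReal (1 / 2) * ENNReal.ofReal (∫ x, localDensity h ψ x) +
        ENNReal.ofReal (1 / (4 * π)) * ENNReal.ofReal ((2 * (2 * K) + 32) * π * T) := by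
    have hne : ENNReal.ofReal (1 / (4 * π)) * seminormSq (fun x => cos (φ x)) ≠ ⊤ :=
      ENNReal.mul_ne_top ENNReal.ofReal_ne_top (seminormSq_lt_top hfin).ne
    refine (ENNReal.add_le_add_iff_right hne).mp (hle.trans ?_)
    calc _ ≤ ENNReal.ofReal (1 / 2) * ENNReal.ofReal (∫ x, localDensity h ψ x) +
          ENNReal.ofReal (1 / (4 * π)) * (seminormSq (fun x => cos (φ x)) +
          ENNReal.ofReal ((2 * (2 * K) + 32) * π * T)) := by gcongr
      _ = _ := by rw [mul_add]; ring
  rw [← ENNReal.ofReal_mul (by positivity), ← ENNReal.ofReal_mul (by positivity),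
    ← ENNReal.ofReal_mul (by positivity), ← ENNReal.ofReal_add (by positivity) (by positivity),
    ENNReal.ofReal_le_ofReal_iff (by positivity), hval] at hfinal
  nlinarith

/-- Weak Euler–Lagrange inequality at a local minimiser: the first variation of the exchange energy
is controlled by the first variation of `cos φ` in total variation. -/
lemma euler_lagrange {h : ℝ} (h0 : 0 ≤ h) {φ : ℝ → ℝ} (hφ : ContDiff ℝ 1 φ)
    (hfin : energy h φ < ⊤) (a : ℝ)
    (hmin : ∀ ψ, ContDiff ℝ 1 ψ → (∀ x, x ∉ Set.Icc (a - 1) (a + 1) → ψ x = φ x) →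
      energy h φ ≤ energy h ψ) :
    ∃ C, 0 ≤ C ∧ ∀ η : ℝ → ℝ, ContDiff ℝ 1 η → (∀ x, x ∉ Set.Icc (a - 1) (a + 1) → η x = 0) →
      0 ≤ (∫ x, deriv φ x * deriv η x) +
        C * ∫ x, (|η x| * |deriv φ x| + |sin (φ x)| * |deriv η x|) := by
  have hcφ := hφ.continuous
  have hcφ' := hφ.continuous_deriv le_rfl
  obtain ⟨K, hK⟩ := (isCompact_Icc (a := a - 2) (b := a + 2)).exists_bound_of_continuousOn
    hcφ'.continuousOn
  have hK0 : 0 ≤ K := (norm_nonneg _).trans (hK a ⟨by linarith, by linarith⟩)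
  set C := 2 + 2 * h + 1 / (4 * π) * ((2 * (2 * (K + 1)) + 32) * π) with hC
  have hC0 : 0 ≤ C := by positivity
  refine ⟨C, hC0, fun η hη hηs => ?_⟩
  have hcη := hη.continuous
  have hcη' := hη.continuous_deriv le_rfl
  have hηs' := deriv_eq_zero_outside hηs
  obtain ⟨N, hN⟩ := (isCompact_Icc (a := a - 2) (b := a + 2)).exists_bound_of_continuousOn
    hcη'.continuousOn
  have hN0 : 0 ≤ N := (norm_nonneg _).trans (hN a ⟨by linarith, by linarith⟩)
  set A := ∫ x, deriv φ x * deriv η x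
  set B := ∫ x, (|η x| * |deriv φ x| + |sin (φ x)| * |deriv η x|)
  set D := ∫ x, deriv η x ^ 2
  set F := ∫ x, |η x| * |deriv η x|
  have iA : Integrable fun x => deriv φ x * deriv η x :=
    integrable_of_outside (a := a - 1) (b := a + 1) (by fun_prop) fun x hx => by simp [hηs' x hx]
  have iB : Integrable fun x => |η x| * |deriv φ x| + |sin (φ x)| * |deriv η x| :=
    integrable_of_outside (a := a - 1) (b := a + 1) (by fun_prop) fun x hx => by
      simp [hηs' x hx, hηs x hx]
  have iD : Integrable fun x => deriv η x ^ 2 :=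
    integrable_of_outside (a := a - 1) (b := a + 1) (by fun_prop) fun x hx => by simp [hηs' x hx]
  have iF : Integrable fun x => |η x| * |deriv η x| :=
    integrable_of_outside (a := a - 1) (b := a + 1) (by fun_prop) fun x hx => by simp [hηs' x hx]
  have key : ∀ ε : ℝ, 0 < ε → ε ≤ 1 / (N + 1) → 0 ≤ (A + C * B) + ε * (1 / 2 * D + C * F) := by
    intro ε hε hεN
    have hεN1 : ε * N ≤ 1 := by
      rw [le_div_iff₀ (by positivity)] at hεN; linarith
    set ψ : ℝ → ℝ := fun x => φ x + ε * η x with hψdef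
    have hψ : ContDiff ℝ 1 ψ := hφ.add (contDiff_const.mul hη)
    have hdη : ∀ x, HasDerivAt η (deriv η x) x := fun x =>
      ((hη.differentiable one_ne_zero) x).hasDerivAt
    have hdφ : ∀ x, HasDerivAt φ (deriv φ x) x := fun x =>
      ((hφ.differentiable one_ne_zero) x).hasDerivAt
    have hdψ : ∀ x, HasDerivAt ψ (deriv φ x + ε * deriv η x) x := fun x =>
      (hdφ x).add ((hdη x).const_mul ε)
    have hψs : ∀ x, x ∉ Set.Icc (a - 1) (a + 1) → ψ x = φ x := fun x hx => by
      simp [hψdef, hηs x hx]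
    have h1 := exchange_comparison h0 hφ hψ hfin (hmin ψ hψ hψs) (K := K + 1) (by positivity) hψs
      (fun x hx => (hK x hx).trans (by linarith)) (fun x hx => by
        rw [(hdψ x).deriv]
        refine (abs_add_le _ _).trans (add_le_add (hK x hx) ?_)
        rw [abs_mul, abs_of_pos hε]
        exact (mul_le_mul_of_nonneg_left (hN x hx) hε.le).trans hεN1)
    rw [← hC] at h1
    have e1 : ∫ x, (deriv ψ x ^ 2 - deriv φ x ^ 2) = 2 * ε * A + ε ^ 2 * D := by
      rw [← integral_const_mul, ← integral_const_mul, ← integral_add (iA.const_mul _)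
        (iD.const_mul _)]
      congr 1; funext x
      rw [(hdψ x).deriv]; ring
    have hdq : ∀ x, HasDerivAt (fun x => cos (ψ x) - cos (φ x))
        (-sin (ψ x) * (deriv φ x + ε * deriv η x) - -sin (φ x) * deriv φ x) x := fun x =>
      (hdψ x).cos.sub (hdφ x).cos
    have e2 : ∫ x, |deriv (fun x => cos (ψ x) - cos (φ x)) x| ≤ ε * B + ε ^ 2 * F := by
      rw [← integral_const_mul, ← integral_const_mul, ← integral_add (iB.const_mul _)
        (iF.const_mul _)]
      refine integral_mono_of_nonneg (Eventually.of_forall fun _ => abs_nonneg _)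
        ((iB.const_mul _).add (iF.const_mul _)) (Eventually.of_forall fun x => ?_)
      change |_| ≤ _
      rw [(hdq x).deriv]
      have hsin : |sin (ψ x) - sin (φ x)| ≤ ε * |η x| := by
        have := abs_sin_sub_sin_le (ψ x) (φ x)
        rwa [show ψ x - φ x = ε * η x by simp [hψdef], abs_mul, abs_of_pos hε] at this
      have hsin2 : |sin (ψ x)| ≤ |sin (φ x)| + ε * |η x| := by
        have := abs_sub_abs_le_abs_sub (sin (ψ x)) (sin (φ x)); linarith
      calc |-sin (ψ x) * (deriv φ x + ε * deriv η x) - -sin (φ x) * deriv φ x|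
          = |(sin (φ x) - sin (ψ x)) * deriv φ x + -(ε * (sin (ψ x) * deriv η x))| := by ring_nf
        _ ≤ |sin (ψ x) - sin (φ x)| * |deriv φ x| + ε * (|sin (ψ x)| * |deriv η x|) := by
            refine (abs_add_le _ _).trans (le_of_eq ?_)
            rw [abs_neg, abs_mul, abs_mul, abs_mul, abs_of_pos hε, abs_sub_comm]
        _ ≤ ε * |η x| * |deriv φ x| + ε * ((|sin (φ x)| + ε * |η x|) * |deriv η x|) := by gcongr
        _ = _ := by ring
    rw [e1] at h1
    have h2 := mul_le_mul_of_nonneg_left e2 hC0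
    have h3 : 0 ≤ ε * ((A + C * B) + ε * (1 / 2 * D + C * F)) := by nlinarith
    exact nonneg_of_mul_nonneg_right h3 hε
  have hlim : Tendsto (fun ε : ℝ => (A + C * B) + ε * (1 / 2 * D + C * F)) (𝓝[>] 0)
      (𝓝 ((A + C * B) + 0 * (1 / 2 * D + C * F))) :=
    ((by fun_prop : Continuous fun ε : ℝ =>
      (A + C * B) + ε * (1 / 2 * D + C * F)).tendsto 0).mono_left nhdsWithin_le_nhds
  rw [zero_mul, add_zero] at hlim
  refine ge_of_tendsto hlim ?_
  filter_upwards [Ioc_mem_nhdsGT (show (0:ℝ) < 1 / (N + 1) by positivity)] with ε hε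
  exact key ε hε.1 hε.2

/-! ### Zeros of `sin φ` and unique continuation -/

lemma exists_mollifier (y : ℝ) {δ : ℝ} (hδ : 0 < δ) : ∃ b : ℝ → ℝ, Continuous b ∧ (∀ x, 0 ≤ b x) ∧
    (∀ x, x ∉ Set.Icc (y - δ) (y + δ) → b x = 0) ∧ ∫ x, b x = 1 := by
  let f : ContDiffBump y := ⟨δ / 2, δ, by positivity, by linarith⟩
  refine ⟨f.normed volume, f.continuous_normed, fun x => f.nonneg_normed x, fun x hx => ?_,
    f.integral_normed⟩
  have : x ∉ Function.support (f.normed volume) := by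
    rw [f.support_normed_eq, Real.ball_eq_Ioo]
    exact fun h => hx (Set.Ioo_subset_Icc_self h)
  simpa using this

lemma abs_integral_mollifier_sub_le {b f : ℝ → ℝ} {y δ ε : ℝ} (hb : Continuous b)
    (hb0 : ∀ x, 0 ≤ b x) (hbs : ∀ x, x ∉ Set.Icc (y - δ) (y + δ) → b x = 0) (hb1 : ∫ x, b x = 1)
    (hf : Continuous f) (hε : ∀ x ∈ Set.Icc (y - δ) (y + δ), |f x - f y| ≤ ε) :
    |(∫ x, f x * b x) - f y| ≤ ε := by
  have ib : Integrable b := integrable_of_outside hb hbs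
  have ifb : Integrable fun x => f x * b x :=
    integrable_of_outside (a := y - δ) (b := y + δ) (hf.mul hb) fun x hx => by simp [hbs x hx]
  have e : (∫ x, f x * b x) - f y = ∫ x, (f x - f y) * b x := by
    have : ∀ x, (f x - f y) * b x = f x * b x - f y * b x := fun x => by ring
    simp only [this]
    rw [integral_sub ifb (ib.const_mul _), integral_const_mul, hb1, mul_one]
  rw [e]
  calc |∫ x, (f x - f y) * b x| ≤ ∫ x, ε * b x := by
        rw [← Real.norm_eq_abs]
        refine norm_integral_le_of_norm_le (ib.const_mul _) (Eventually.of_forall fun x => ?_)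
        rw [Real.norm_eq_abs, abs_mul, abs_of_nonneg (hb0 x)]
        by_cases hx : x ∈ Set.Icc (y - δ) (y + δ)
        · exact mul_le_mul_of_nonneg_right (hε x hx) (hb0 x)
        · simp [hbs x hx]
    _ = ε := by rw [integral_const_mul, hb1, mul_one]

/-- Near a degenerate zero `a` of `sin φ`, the Euler–Lagrange inequality bounds
`|φ'(y)| = |φ'(y) - φ'(a)|` on a short interval by half of the maximum of `|φ'|` there, so `φ'`
vanishes on that interval. -/
lemma degenerate_zero {φ : ℝ → ℝ} (hφ : ContDiff ℝ 1 φ) {a C : ℝ} (hC : 0 ≤ C)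
    (hEL : ∀ η : ℝ → ℝ, ContDiff ℝ 1 η → (∀ x, x ∉ Set.Icc (a - 1) (a + 1) → η x = 0) →
      0 ≤ (∫ x, deriv φ x * deriv η x) +
        C * ∫ x, (|η x| * |deriv φ x| + |sin (φ x)| * |deriv η x|))
    (hsa : sin (φ a) = 0) (hda : deriv φ a = 0) :
    ∀ᶠ y in 𝓝 a, sin (φ y) = 0 ∧ deriv φ y = 0 := by
  have hcφ := hφ.continuous
  have hcφ' := hφ.continuous_deriv le_rfl
  obtain ⟨r, hr0, hr1, hrC⟩ : ∃ r : ℝ, 0 < r ∧ r ≤ 1 ∧ 6 * C * r ≤ 1 / 2 := by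
    refine ⟨1 / (12 * C + 1), by positivity, ?_, ?_⟩
    · rw [div_le_one (by positivity)]; linarith
    · rw [mul_one_div, div_le_iff₀ (by positivity)]; linarith
  set I := Set.Icc (a - r) (a + r) with hI
  have haI : a ∈ I := ⟨by linarith, by linarith⟩
  obtain ⟨y0, hy0, hmax⟩ := (isCompact_Icc : IsCompact I).exists_isMaxOn ⟨a, haI⟩
    hcφ'.abs.continuousOn
  set M := |deriv φ y0| with hM
  have hM0 : 0 ≤ M := abs_nonneg _
  have hbd : ∀ x ∈ I, |deriv φ x| ≤ M := fun x hx => hmax hx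
  have hsin : ∀ x ∈ I, |sin (φ x)| ≤ M * r := by
    intro x hx
    have hd : ∀ x ∈ I, HasDerivWithinAt φ (deriv φ x) I x := fun x _ =>
      (((hφ.differentiable one_ne_zero) x).hasDerivAt).hasDerivWithinAt
    have h1 := (convex_Icc _ _).norm_image_sub_le_of_norm_hasDerivWithin_le hd hbd haI hx
    have h2 := abs_sin_sub_sin_le (φ x) (φ a)
    rw [hsa, sub_zero] at h2
    have h3 : |x - a| ≤ r := abs_le.mpr ⟨by linarith [hx.1], by linarith [hx.2]⟩
    rw [Real.norm_eq_abs, Real.norm_eq_abs] at h1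
    exact h2.trans (h1.trans (mul_le_mul_of_nonneg_left h3 hM0))
  -- the estimate for a mean-zero derivative of a test function
  have hone : ∀ g : ℝ → ℝ, Continuous g → (∀ x, x ∉ I → g x = 0) → ∫ x, g x = 0 →
      ∫ x, |g x| ≤ 2 → -(∫ x, deriv φ x * g x) ≤ 6 * C * r * M := by
    intro g hg hgs hgm hg2
    have ig : Integrable g := integrable_of_outside hg hgs
    set η : ℝ → ℝ := fun x => ∫ t in (a - r)..x, g t with hη
    have hdη : ∀ x, HasDerivAt η (g x) x := fun x =>
      intervalIntegral.integral_hasDerivAt_right (hg.intervalIntegrable _ _)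
        hg.aestronglyMeasurable.stronglyMeasurableAtFilter hg.continuousAt
    have hη' : deriv η = g := funext fun x => (hdη x).deriv
    have hηC : ContDiff ℝ 1 η := contDiff_one_of_hasDerivAt hdη hg
    have hηI : ∀ x, x ∉ I → η x = 0 := by
      intro x hx
      rcases lt_or_ge x (a - r) with h | h
      · simp only [hη]
        refine intervalIntegral.integral_zero_ae (Eventually.of_forall fun t ht => ?_)
        rw [Set.uIoc_of_ge h.le] at ht
        rcases eq_or_lt_of_le ht.2 with h5 | h5
        · -- the endpoint value vanishes by continuity
          rw [h5]
          have hcl : a - r ∈ closure (Set.Iio (a - r)) := by simp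
          have : Set.EqOn g (fun _ => 0) (closure (Set.Iio (a - r))) :=
            Set.EqOn.closure (fun z hz => hgs z fun h6 => absurd h6.1 (not_le.mpr hz)) hg
              continuous_const
          exact this hcl
        · exact hgs t fun h6 => absurd h6.1 (not_le.mpr h5)
      · have hx2 : a + r < x := by
          by_contra h5
          exact hx ⟨h, not_lt.mp h5⟩
        simp only [hη]
        rw [intervalIntegral.integral_of_le h, ← integral_Icc_eq_integral_Ioc,
          setIntegral_eq_integral_of_forall_compl_eq_zero, hgm]
        intro t ht
        exact hgs t fun h6 => ht ⟨h6.1, h6.2.trans hx2.le⟩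
    have hη2 : ∀ x, |η x| ≤ 2 := by
      intro x
      have h1 := intervalIntegral.norm_integral_le_integral_norm_uIoc (f := g) (μ := volume)
        (a := a - r) (b := x)
      refine h1.trans ?_
      exact (setIntegral_le_integral ig.norm (Eventually.of_forall fun _ => norm_nonneg _)).trans hg2
    have hsub : I ⊆ Set.Icc (a - 1) (a + 1) := Set.Icc_subset_Icc (by linarith) (by linarith)
    have h1 := hEL η hηC fun x hx => hηI x fun h => hx (hsub h)
    rw [hη'] at h1
    have iI : Integrable (I.indicator fun _ => 2 * M) :=
      (integrable_indicator_iff measurableSet_Icc).mpr (integrableOn_const (by simp))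
    have h2 : ∫ x, (|η x| * |deriv φ x| + |sin (φ x)| * |g x|) ≤ 6 * r * M := by
      calc ∫ x, (|η x| * |deriv φ x| + |sin (φ x)| * |g x|)
          ≤ ∫ x, (I.indicator (fun _ => 2 * M) x + M * r * |g x|) := by
            refine integral_mono_of_nonneg (Eventually.of_forall fun _ => by positivity)
              (iI.add (ig.abs.const_mul _)) (Eventually.of_forall fun x => ?_)
            by_cases hx : x ∈ I
            · simp only [Set.indicator_of_mem hx]
              exact add_le_add (mul_le_mul (hη2 x) (hbd x hx) (abs_nonneg _) two_pos.le)
                (mul_le_mul_of_nonneg_right (hsin x hx) (abs_nonneg _))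
            · simp [hηI x hx, hgs x hx, hx]
        _ = 2 * r * (2 * M) + M * r * ∫ x, |g x| := by
            rw [integral_add iI (ig.abs.const_mul _), integral_const_mul,
              integral_indicator measurableSet_Icc, setIntegral_const,
              Real.volume_real_Icc_of_le (by linarith), smul_eq_mul]
            ring
        _ ≤ 2 * r * (2 * M) + M * r * 2 := by gcongr
        _ = _ := by ring
    have h3 := mul_le_mul_of_nonneg_left h2 hC
    linarith
  have hhalf : ∀ y ∈ Set.Ioo (a - r) (a + r), |deriv φ y| ≤ M / 2 := by
    intro y hy
    refine le_of_forall_pos_le_add fun ε hε => ?_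
    have hev : ∀ z ∈ Set.Ioo (a - r) (a + r), ∃ δ > 0, Set.Icc (z - δ) (z + δ) ⊆ I ∧
        ∀ x ∈ Set.Icc (z - δ) (z + δ), |deriv φ x - deriv φ z| ≤ ε / 2 := by
      intro z hz
      have h1 : ∀ᶠ x in 𝓝 z, x ∈ I ∧ |deriv φ x - deriv φ z| ≤ ε / 2 := by
        filter_upwards [Icc_mem_nhds hz.1 hz.2,
          Metric.tendsto_nhds.mp (hcφ'.tendsto z) (ε / 2) (by positivity)] with x hx1 hx2
        exact ⟨hx1, by rw [Real.dist_eq] at hx2; exact hx2.le⟩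
      obtain ⟨δ, hδ, h2⟩ := (Metric.nhds_basis_closedBall.eventually_iff).mp h1
      rw [Real.closedBall_eq_Icc] at h2
      exact ⟨δ, hδ, fun x hx => (h2 hx).1, fun x hx => (h2 hx).2⟩
    obtain ⟨δ1, hδ1, hI1, hv1⟩ := hev y hy
    obtain ⟨δ2, hδ2, hI2, hv2⟩ := hev a ⟨by linarith, by linarith⟩
    obtain ⟨b1, hb1, hb10, hb1s, hb1i⟩ := exists_mollifier y hδ1
    obtain ⟨b2, hb2, hb20, hb2s, hb2i⟩ := exists_mollifier a hδ2
    have m1 := abs_le.mp (abs_integral_mollifier_sub_le hb1 hb10 hb1s hb1i hcφ' hv1)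
    have m2 := abs_le.mp (abs_integral_mollifier_sub_le hb2 hb20 hb2s hb2i hcφ' hv2)
    have i1 : Integrable b1 := integrable_of_outside hb1 hb1s
    have i2 : Integrable b2 := integrable_of_outside hb2 hb2s
    have j1 : Integrable fun x => deriv φ x * b1 x :=
      integrable_of_outside (a := y - δ1) (b := y + δ1) (hcφ'.mul hb1)
        fun x hx => by simp [hb1s x hx]
    have j2 : Integrable fun x => deriv φ x * b2 x :=
      integrable_of_outside (a := a - δ2) (b := a + δ2) (hcφ'.mul hb2)
        fun x hx => by simp [hb2s x hx]
    have hbs : ∀ x, x ∉ I → b1 x = 0 ∧ b2 x = 0 := fun x hx =>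
      ⟨hb1s x fun h => hx (hI1 h), hb2s x fun h => hx (hI2 h)⟩
    have habs : ∀ x, |b1 x - b2 x| ≤ b1 x + b2 x := fun x =>
      abs_le.mpr ⟨by linarith [hb10 x, hb20 x], by linarith [hb10 x, hb20 x]⟩
    have hL1 : ∫ x, |b1 x - b2 x| ≤ 2 := by
      calc _ ≤ ∫ x, (b1 x + b2 x) := integral_mono (i1.sub i2).abs (i1.add i2) habs
        _ = 2 := by rw [integral_add i1 i2, hb1i, hb2i]; norm_num
    have A1 := hone (fun x => b1 x - b2 x) (hb1.sub hb2) (fun x hx => by simp [hbs x hx])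
      (by rw [integral_sub i1 i2, hb1i, hb2i, sub_self]) hL1
    have A2 := hone (fun x => b2 x - b1 x) (hb2.sub hb1) (fun x hx => by simp [hbs x hx])
      (by rw [integral_sub i2 i1, hb1i, hb2i, sub_self]) (by simpa only [abs_sub_comm] using hL1)
    simp only [mul_sub] at A1 A2
    rw [integral_sub j1 j2] at A1
    rw [integral_sub j2 j1] at A2
    have h6 : 6 * C * r * M ≤ M / 2 := by nlinarith
    rw [hda] at m2
    exact abs_le.mpr ⟨by linarith [m1.1, m1.2, m2.1, m2.2], by linarith [m1.1, m1.2, m2.1, m2.2]⟩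
  have hclos : |deriv φ y0| ≤ M / 2 := by
    have hsub : Set.Ioo (a - r) (a + r) ⊆ {y | |deriv φ y| ≤ M / 2} := hhalf
    have hcl := closure_minimal hsub (isClosed_le hcφ'.abs continuous_const)
    rw [closure_Ioo (by linarith)] at hcl
    exact hcl hy0
  have hMz : M = 0 := by linarith
  filter_upwards [Icc_mem_nhds (show a - r < a by linarith) (show a < a + r by linarith)] with y hy
  have h1 := hsin y hy
  have h2 := hbd y hy
  rw [hMz] at h1 h2
  rw [zero_mul] at h1
  exact ⟨abs_nonpos_iff.mp h1, abs_nonpos_iff.mp h2⟩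

/-- A non-constant local minimiser has no degenerate zeros of `sin φ`. -/
lemma deriv_ne_zero_of_minimal {h : ℝ} (h0 : 0 ≤ h) {φ : ℝ → ℝ} (hφ : ContDiff ℝ 1 φ)
    (hfin : energy h φ < ⊤)
    (hmin : ∀ a ψ, ContDiff ℝ 1 ψ → (∀ x, x ∉ Set.Icc (a - 1) (a + 1) → ψ x = φ x) →
      energy h φ ≤ energy h ψ)
    (hnc : ∃ x y, φ x ≠ φ y) (a : ℝ) (hsa : sin (φ a) = 0) : deriv φ a ≠ 0 := by
  intro hda
  have hclosed : IsClosed {x | sin (φ x) = 0 ∧ deriv φ x = 0} :=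
    (isClosed_eq (continuous_sin.comp hφ.continuous) continuous_const).inter
      (isClosed_eq (hφ.continuous_deriv le_rfl) continuous_const)
  have hopen : IsOpen {x | sin (φ x) = 0 ∧ deriv φ x = 0} := by
    rw [isOpen_iff_mem_nhds]
    rintro x ⟨hx1, hx2⟩
    obtain ⟨C, hC, hEL⟩ := euler_lagrange h0 hφ hfin x (hmin x)
    exact degenerate_zero hφ hC hEL hx1 hx2
  have huniv := IsClopen.eq_univ ⟨hclosed, hopen⟩ ⟨a, hsa, hda⟩
  obtain ⟨x, y, hxy⟩ := hnc
  refine hxy (is_const_of_deriv_eq_zero (hφ.differentiable one_ne_zero) (fun z => ?_) x y)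
  exact (huniv.symm ▸ Set.mem_univ z : z ∈ {x | sin (φ x) = 0 ∧ deriv φ x = 0}).2

/-- If `cos φ` is even, then away from degenerate zeros of `sin φ` the phase is determined by
`cos φ`; continuation from the origin gives `φ(x) = 2c - φ(-x)`. -/
lemma eq_pointReflect {φ : ℝ → ℝ} (hφ : ContDiff ℝ 1 φ) {c : ℝ} (hc : ∃ M : ℤ, c = M * π)
    (h0 : φ 0 = c) (hcos : ∀ x, cos (φ (-x)) = cos (φ x))
    (hnd : ∀ a, sin (φ a) = 0 → deriv φ a ≠ 0) : φ = pointReflect c φ := by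
  set ρ := pointReflect c φ with hρdef
  have hρ : ContDiff ℝ 1 ρ := contDiff_pointReflect hφ
  have hcφ := hφ.continuous
  have hcρ := hρ.continuous
  have hdφ : ∀ x, HasDerivAt φ (deriv φ x) x := fun x =>
    ((hφ.differentiable one_ne_zero) x).hasDerivAt
  have hdρ : ∀ x, HasDerivAt ρ (deriv ρ x) x := fun x =>
    ((hρ.differentiable one_ne_zero) x).hasDerivAt
  have hcc : ∀ x, cos (φ x) = cos (ρ x) := fun x => by
    rw [hρdef, pointReflect, cos_two_mul_sub hc, hcos]
  have hclosed : IsClosed {x | φ x = ρ x ∧ deriv φ x = deriv ρ x} :=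
    (isClosed_eq hcφ hcρ).inter
      (isClosed_eq (hφ.continuous_deriv le_rfl) (hρ.continuous_deriv le_rfl))
  have hopen : IsOpen {x | φ x = ρ x ∧ deriv φ x = deriv ρ x} := by
    rw [isOpen_iff_mem_nhds]
    rintro x ⟨hx1, hx2⟩
    have hds : HasDerivAt (fun y => sin ((φ y + ρ y) / 2)) (cos (φ x) * deriv φ x) x := by
      have := (((hdφ x).add (hdρ x)).div_const 2).sin
      simp only [Pi.add_apply] at this
      rw [← hx1, ← hx2] at this
      convert this using 1
      rw [show (φ x + φ x) / 2 = φ x by ring]; ring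
    have hne : ∀ᶠ y in 𝓝[≠] x, sin ((φ y + ρ y) / 2) ≠ 0 := by
      by_cases hs : sin (φ x) = 0
      · refine hds.eventually_ne (mul_ne_zero ?_ (hnd x hs))
        intro hcz
        have := sin_sq_add_cos_sq (φ x)
        rw [hs, hcz] at this
        norm_num at this
      · have : sin ((φ x + ρ x) / 2) ≠ 0 := by
          rwa [← hx1, show (φ x + φ x) / 2 = φ x by ring]
        exact ((by fun_prop : Continuous fun y => sin ((φ y + ρ y) / 2)).continuousAt.eventually_ne
          this).filter_mono nhdsWithin_le_nhds
    have hsmall : ∀ᶠ y in 𝓝 x, |φ y - ρ y| < π := by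
      have h1 : Tendsto (fun y => |φ y - ρ y|) (𝓝 x) (𝓝 |φ x - ρ x|) :=
        (by fun_prop : Continuous fun y => |φ y - ρ y|).tendsto x
      rw [hx1, sub_self, abs_zero] at h1
      exact h1.eventually (gt_mem_nhds pi_pos)
    have heq : ∀ᶠ y in 𝓝 x, φ y = ρ y := by
      rw [eventually_nhdsWithin_iff] at hne
      filter_upwards [hne, hsmall] with y hy1 hy2
      by_cases hyx : y = x
      · rw [hyx]; exact hx1
      · have h1 := hy1 hyx
        have h2 := cos_sub_cos (φ y) (ρ y)
        rw [hcc y, sub_self] at h2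
        have h3 : sin ((φ y - ρ y) / 2) = 0 := by
          rcases mul_eq_zero.mp h2.symm with h4 | h4
          · exact absurd ((mul_eq_zero.mp h4).resolve_left (by norm_num)) h1
          · exact h4
        have h5 := abs_lt.mp hy2
        rw [sin_eq_zero_iff_of_lt_of_lt (by linarith) (by linarith)] at h3
        linarith
    filter_upwards [heq.eventually_nhds] with y hy
    exact ⟨hy.self_of_nhds, (EventuallyEq.deriv_eq hy)⟩
  have hmem : (0:ℝ) ∈ {x | φ x = ρ x ∧ deriv φ x = deriv ρ x} := by
    constructor
    · simp only [hρdef, pointReflect, neg_zero, h0]; ring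
    · rw [hρdef, (hasDerivAt_pointReflect hφ 0).deriv]; simp
  have huniv := IsClopen.eq_univ ⟨hclosed, hopen⟩ ⟨0, hmem⟩
  funext z
  exact (huniv.symm ▸ Set.mem_univ z : z ∈ {x | φ x = ρ x ∧ deriv φ x = deriv ρ x}).1

/-! ### Symmetrisation and minimisers -/

lemma energy_translate (h t : ℝ) (φ : ℝ → ℝ) : energy h (fun x => φ (x + t)) = energy h φ := by
  unfold energy
  congr 2
  · simp only [deriv_comp_add_const]
    exact lintegral_add_right_eq_self
      (fun x => ENNReal.ofReal (deriv φ x ^ 2 + 2 * Wpot h (φ x))) t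
  · rw [← lintegral_add_right_eq_self (fun s => ∫⁻ x, ENNReal.ofReal
      ((cos (φ s) - cos (φ x)) ^ 2 / (s - x) ^ 2)) t]
    refine lintegral_congr fun s => ?_
    rw [← lintegral_add_right_eq_self (fun x => ENNReal.ofReal
      ((cos (φ (s + t)) - cos (φ x)) ^ 2 / (s + t - x) ^ 2)) t]
    simp only [add_sub_add_right_eq_sub]

lemma tendsto_of_eq_outside {φ ψ : ℝ → ℝ} {a Lp Lm : ℝ}
    (hs : ∀ x, x ∉ Set.Icc (a - 1) (a + 1) → ψ x = φ x)
    (hp : Tendsto φ atTop (𝓝 Lp)) (hm : Tendsto φ atBot (𝓝 Lm)) :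
    Tendsto ψ atTop (𝓝 Lp) ∧ Tendsto ψ atBot (𝓝 Lm) := by
  constructor
  · refine hp.congr' ?_
    filter_upwards [eventually_gt_atTop (a + 1)] with x hx
    exact (hs x fun h => absurd h.2 (not_le.mpr hx)).symm
  · refine hm.congr' ?_
    filter_upwards [eventually_lt_atBot (a - 1)] with x hx
    exact (hs x fun h => absurd h.1 (not_le.mpr hx)).symm

lemma le_energy_of_eq_outside {h d : ℝ} {φ : ℝ → ℝ} (hφ : φ ∈ AA h d)
    (hmin : energy h φ = Einf h d) (a : ℝ) (ψ : ℝ → ℝ) (hψ : ContDiff ℝ 1 ψ)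
    (hs : ∀ x, x ∉ Set.Icc (a - 1) (a + 1) → ψ x = φ x) : energy h φ ≤ energy h ψ := by
  obtain ⟨-, -, Lp, hp, Lm, hm, hp', hm', hd⟩ := mem_AA_iff.mp hφ
  by_cases hfin : energy h ψ < ⊤
  · have ht := tendsto_of_eq_outside hs hp' hm'
    rw [hmin]
    exact iInf₂_le ψ (mem_AA_iff.mpr ⟨hψ, hfin, Lp, hp, Lm, hm, ht.1, ht.2, hd⟩)
  · rw [not_lt, top_le_iff] at hfin
    rw [hfin]; exact le_top

lemma exists_eq_midpoint {φ : ℝ → ℝ} (hφ : Continuous φ) {Lp Lm : ℝ}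
    (hp : Tendsto φ atTop (𝓝 Lp)) (hm : Tendsto φ atBot (𝓝 Lm)) (hne : Lp ≠ Lm) :
    ∃ t, φ t = (Lp + Lm) / 2 := by
  rcases lt_or_gt_of_ne hne with h | h
  · exact mem_range_of_exists_le_of_exists_ge hφ
      ((hp.eventually_lt_const (show Lp < (Lp + Lm) / 2 by linarith)).exists.imp fun _ => le_of_lt)
      ((hm.eventually_const_lt (show (Lp + Lm) / 2 < Lm by linarith)).exists.imp fun _ => le_of_lt)
  · exact mem_range_of_exists_le_of_exists_ge hφ
      ((hm.eventually_lt_const (show Lm < (Lp + Lm) / 2 by linarith)).exists.imp fun _ => le_of_lt)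
      ((hp.eventually_const_lt (show (Lp + Lm) / 2 < Lp by linarith)).exists.imp fun _ => le_of_lt)

/-- A phase with distinct limits can be translated so that it takes the midpoint value of its limits
at the origin, where both reflected phases become admissible competitors. -/
lemma exists_competitors {h d : ℝ} (h0 : 0 ≤ h)
    (hd : ∃ n : ℤ, d = n + alphaParam h / π ∨ d = n - alphaParam h / π) {φ : ℝ → ℝ}
    (hφ : ContDiff ℝ 1 φ) (hfin : energy h φ < ⊤) {Lp Lm : ℝ} (hp : Lp ∈ limSet h)
    (hm : Lm ∈ limSet h) (hp' : Tendsto φ atTop (𝓝 Lp)) (hm' : Tendsto φ atBot (𝓝 Lm))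
    (hd' : (Lp - Lm) / (2 * π) = d) (hne : Lp ≠ Lm) :
    ∃ t c : ℝ, ∃ ψ₁ ψ₂ : ℝ → ℝ, (∃ M : ℤ, c = M * π) ∧ φ t = c ∧ ψ₁ ∈ AA h d ∧ ψ₂ ∈ AA h d ∧
      (∀ x, cos (ψ₁ (-x)) = cos (ψ₁ x)) ∧ (∀ x, sin (ψ₁ (-x)) = - sin (ψ₁ x)) ∧
      (∀ x, cos (ψ₂ (-x)) = cos (ψ₂ x)) ∧ (∀ x, sin (ψ₂ (-x)) = - sin (ψ₂ x)) ∧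
      ∃ δ, energy h ψ₁ + energy h ψ₂ + δ = 2 * energy h φ ∧
        (δ = 0 → ∀ x, cos (φ (-x + t)) = cos (φ (x + t))) := by
  obtain ⟨t, ht⟩ := exists_eq_midpoint hφ.continuous hp' hm' hne
  have hc : ∃ M : ℤ, (Lp + Lm) / 2 = M * π := exists_midpoint hd h0 hp hm hd'
  set c := (Lp + Lm) / 2 with hcdef
  set χ : ℝ → ℝ := fun x => φ (x + t) with hχdef
  have hχ : ContDiff ℝ 1 χ := hφ.comp (contDiff_id.add contDiff_const)
  have hχ0 : χ 0 = c := by simp only [hχdef, zero_add, ht]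
  have hρ0 : pointReflect c χ 0 = c := by simp only [pointReflect, neg_zero, hχ0]; ring
  have hE : energy h χ = energy h φ := energy_translate h t φ
  obtain ⟨δ, hδ, hδ0⟩ := energy_reflect hc hχ hχ0 (hE ▸ hfin)
  rw [hE] at hδ
  have h2 : 2 * energy h φ < ⊤ := ENNReal.mul_lt_top (by simp) hfin
  have h1 : energy h (oddExtend c χ) < ⊤ :=
    lt_of_le_of_lt ((le_self_add.trans le_self_add).trans hδ.le) h2
  have h3 : energy h (oddExtend c (pointReflect c χ)) < ⊤ :=
    lt_of_le_of_lt ((le_add_self.trans le_self_add).trans hδ.le) h2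
  have hL : Lp + Lm = 2 * c := by rw [hcdef]; ring
  have hχp : Tendsto χ atTop (𝓝 Lp) := hp'.comp (tendsto_atTop_add_const_right _ t tendsto_id)
  have hχm : Tendsto χ atBot (𝓝 Lm) := hm'.comp (tendsto_atBot_add_const_right _ t tendsto_id)
  have hρp : Tendsto (pointReflect c χ) atTop (𝓝 Lp) := by
    have : Tendsto (fun x => 2 * c - χ (-x)) atTop (𝓝 (2 * c - Lm)) :=
      tendsto_const_nhds.sub (hχm.comp tendsto_neg_atTop_atBot)
    rwa [show 2 * c - Lm = Lp by linarith] at this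
  refine ⟨t, c, _, _, hc, ht, oddExtend_mem_AA hχ hχ0 h1 hp hm hχp hL hd',
    oddExtend_mem_AA (contDiff_pointReflect hχ) hρ0 h3 hp hm hρp hL hd', fun x => ?_,
    sin_oddExtend_neg hc hχ0, fun x => ?_, sin_oddExtend_neg hc hρ0, δ, hδ, hδ0⟩ <;>
  rw [cos_oddExtend hc, cos_oddExtend hc, abs_neg]

lemma eq_const_of_energy_eq_zero {h : ℝ} {φ : ℝ → ℝ} (hφ : ContDiff ℝ 1 φ)
    (hE : energy h φ = 0) (x y : ℝ) : φ x = φ y := by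
  rw [energy_eq, add_eq_zero] at hE
  have h1 : ∫⁻ x, ENNReal.ofReal (localDensity h φ x) = 0 :=
    (mul_eq_zero.mp hE.1).resolve_left (by simp)
  have hc : Continuous fun x => ENNReal.ofReal (localDensity h φ x) :=
    ENNReal.continuous_ofReal.comp (continuous_localDensity hφ)
  rw [lintegral_eq_zero_iff hc.measurable] at h1
  have h2 := (Continuous.ae_eq_iff_eq volume hc continuous_const).mp h1
  refine is_const_of_deriv_eq_zero (hφ.differentiable one_ne_zero) (fun z => ?_) x y
  have h3 := congrFun h2 z
  have h4 : localDensity h φ z ≤ 0 := ENNReal.ofReal_eq_zero.mp h3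
  have h5 := Wpot_nonneg h (φ z)
  have h6 : deriv φ z ^ 2 ≤ 0 := by
    unfold localDensity at h4; linarith
  exact pow_eq_zero_iff two_ne_zero |>.mp (le_antisymm h6 (sq_nonneg _))

/-- **Symmetry.** For `d ∈ ℤ ± α/π`, symmetrisation does not increase the
energy, and minimisers are symmetric up to a translation. -/
theorem symmetry (h : ℝ) (h0 : 0 ≤ h) (h1 : h ≠ 1) (d : ℝ)
    (hd : ∃ n : ℤ, d = n + alphaParam h / Real.pi ∨ d = n - alphaParam h / Real.pi) :
    (∀ φ ∈ AA h d, ∃ ψ ∈ AA h d, energy h ψ ≤ energy h φ ∧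
      (∀ x : ℝ, Real.cos (ψ (-x)) = Real.cos (ψ x)) ∧
      (∀ x : ℝ, Real.sin (ψ (-x)) = - Real.sin (ψ x))) ∧
    (∀ φ ∈ AA h d, energy h φ = Einf h d → ∃ t₀ : ℝ,
      (∀ x : ℝ, Real.cos (φ (-x - t₀)) = Real.cos (φ (x - t₀))) ∧
      (∀ x : ℝ, Real.sin (φ (-x - t₀)) = - Real.sin (φ (x - t₀)))) := by
  constructor
  · intro φ hφ
    obtain ⟨hC, hfin, Lp, hp, Lm, hm, hp', hm', hd'⟩ := mem_AA_iff.mp hφ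
    by_cases hne : Lp = Lm
    · subst hne
      obtain ⟨M, hM⟩ := exists_midpoint hd h0 hp hm hd'
      obtain ⟨hE, hmem⟩ := const_mem_AA h0 hp hd'
      refine ⟨_, hmem, by rw [hE]; exact zero_le, fun _ => rfl, fun _ => ?_⟩
      rw [show Lp = M * π by linarith, sin_int_mul_pi, neg_zero]
    · obtain ⟨t, c, ψ₁, ψ₂, -, -, m1, m2, c1, s1, c2, s2, δ, hδ, -⟩ :=
        exists_competitors h0 hd hC hfin hp hm hp' hm' hd' hne
      by_cases hle : energy h ψ₁ ≤ energy h φ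
      · exact ⟨ψ₁, m1, hle, c1, s1⟩
      · refine ⟨ψ₂, m2, ?_, c2, s2⟩
        by_contra hcon
        have h3 : energy h φ + energy h φ < energy h ψ₁ + energy h ψ₂ :=
          ENNReal.add_lt_add (not_le.mp hle) (not_le.mp hcon)
        rw [← two_mul, ← hδ] at h3
        exact absurd le_self_add (not_le.mpr h3)
  · intro φ hφ hmin
    obtain ⟨hC, hfin, Lp, hp, Lm, hm, hp', hm', hd'⟩ := mem_AA_iff.mp hφ
    by_cases hne : Lp = Lm
    · subst hne
      obtain ⟨M, hM⟩ := exists_midpoint hd h0 hp hm hd'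
      obtain ⟨hE, hmem⟩ := const_mem_AA h0 hp hd'
      have hE0 : energy h φ = 0 := by
        refine le_antisymm ?_ zero_le
        rw [hmin, ← hE]
        exact iInf₂_le _ hmem
      have hconst := eq_const_of_energy_eq_zero hC hE0
      have hval : ∀ x, φ x = M * π := by
        intro x
        have : Tendsto φ atTop (𝓝 (φ x)) := by
          rw [show φ = fun _ => φ x from funext fun y => hconst y x]
          exact tendsto_const_nhds
        rw [tendsto_nhds_unique this hp']
        linarith
      exact ⟨0, fun x => by rw [hval, hval], fun x => by
        rw [hval, hval, sin_int_mul_pi, neg_zero]⟩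
    · obtain ⟨t, c, ψ₁, ψ₂, hc, ht, m1, m2, -, -, -, -, δ, hδ, hδ0⟩ :=
        exists_competitors h0 hd hC hfin hp hm hp' hm' hd' hne
      have e1 : energy h φ ≤ energy h ψ₁ := hmin ▸ iInf₂_le _ m1
      have e2 : energy h φ ≤ energy h ψ₂ := hmin ▸ iInf₂_le _ m2
      have hcos : ∀ x, cos (φ (-x + t)) = cos (φ (x + t)) := by
        refine hδ0 ?_
        have h3 : 2 * energy h φ + δ ≤ 2 * energy h φ + 0 := by
          rw [add_zero]
          calc 2 * energy h φ + δ ≤ energy h ψ₁ + energy h ψ₂ + δ := by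
                rw [two_mul]; gcongr
            _ = _ := hδ
        exact le_antisymm ((ENNReal.add_le_add_iff_left
          (ENNReal.mul_ne_top (by simp) hfin.ne)).mp h3) zero_le
      have hnc : ∃ x y, φ x ≠ φ y := by
        by_contra hcon
        push Not at hcon
        refine hne (tendsto_nhds_unique hp' ?_)
        rw [show φ = fun _ => φ 0 from funext fun y => hcon y 0] at hm' ⊢
        rw [← tendsto_nhds_unique tendsto_const_nhds hm']
        exact tendsto_const_nhds
      have hnd := deriv_ne_zero_of_minimal h0 hC hfin
        (fun a ψ hψ hs => le_energy_of_eq_outside hφ hmin a ψ hψ hs) hnc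
      have hrefl := eq_pointReflect (φ := fun x => φ (x + t)) (c := c)
        (hC.comp (contDiff_id.add contDiff_const)) hc (by simpa using ht) hcos
        (fun a ha => by rw [deriv_comp_add_const]; exact hnd _ ha)
      refine ⟨-t, fun x => by simpa only [sub_neg_eq_add] using hcos x, fun x => ?_⟩
      have h3 := congrFun hrefl (-x)
      simp only [pointReflect, neg_neg] at h3
      rw [sub_neg_eq_add, sub_neg_eq_add, h3, sin_two_mul_sub hc]
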